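/- arXiv:2305.09339 — 3 statements merged into one kernel-verified Lean document; each statement's English description precedes it below -/
import Mathlib

section
/- (Weak-strong uniqueness for capillary fluids, classical form.) Let ν > 0, κ > 0, γ > 1, T > 0 and c > 0. Suppose (ρ₁, u₁) and (ρ₂, u₂) are two pairs of smooth (C^∞) functions on [0,T] × ℝ³ (with values in ℝ and ℝ³ respectively), ℤ³-periodic in the space variable, with ρᵢ ≥ c everywhere, each satisfying pointwise on (0,T) × ℝ³ the Navier–Stokes–Korteweg system ∂_t ρ + div(ρ u) = 0 and ∂_t(ρ u) + div(ρ u ⊗ u) + ∇(ρ^γ) − 2ν div(ρ Du) − 2κ² ρ ∇(Δρ) = 0, and with the same initial data: ρ₁(0,·) = ρ₂(0,·) and u₁(0,·) = u₂(0,·). Then ρ₁ = ρ₂ and u₁ = u₂ on [0,T] × ℝ³. -/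
open scoped BigOperators
open MeasureTheory

noncomputable section

/-- Points of `ℝ³`, realized as `Fin 3 → ℝ`. -/
abbrev V3 : Type := Fin 3 → ℝ

/-- Partial derivative `∂ᵢ f` of a scalar field. -/
def pd (i : Fin 3) (f : V3 → ℝ) (x : V3) : ℝ := fderiv ℝ f x (Pi.single i 1)

/-- Gradient `∇f` of a scalar field. -/
def grad (f : V3 → ℝ) (x : V3) : V3 := fun i => pd i f x

/-- Divergence `div u` of a vector field. -/
def vdiv (u : V3 → V3) (x : V3) : ℝ := ∑ i, pd i (fun y => u y i) x

/-- Laplacian `Δf` of a scalar field. -/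
def lap (f : V3 → ℝ) (x : V3) : ℝ := ∑ i, pd i (fun y => pd i f y) x

/-- Divergence (row-wise) of a matrix field: `(div M)_i = ∑_j ∂_j M_{ij}`. -/
def mdiv (M : V3 → Fin 3 → Fin 3 → ℝ) (x : V3) : V3 :=
  fun i => ∑ j, pd j (fun y => M y i j) x

/-- Jacobian matrix `(∇u)_{ij} = ∂_j u_i` of a vector field. -/
def jacb (u : V3 → V3) (x : V3) : Fin 3 → Fin 3 → ℝ := fun i j => pd j (fun y => u y i) x

/-- Symmetric part `Du = (∇u + ∇ᵀu)/2` of the Jacobian. -/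
def symJ (u : V3 → V3) (x : V3) : Fin 3 → Fin 3 → ℝ :=
  fun i j => (jacb u x i j + jacb u x j i) / 2

/-- Antisymmetric part `Au = (∇u − ∇ᵀu)/2` of the Jacobian. -/
def asymJ (u : V3 → V3) (x : V3) : Fin 3 → Fin 3 → ℝ :=
  fun i j => (jacb u x i j - jacb u x j i) / 2

/-- Euclidean dot product on `ℝ³`. -/
def dot (a b : V3) : ℝ := ∑ i, a i * b i

/-- Squared Euclidean norm on `ℝ³`. -/
def normSq (a : V3) : ℝ := ∑ i, (a i) ^ 2

/-!
The proof is the relative energy method. Put `r = ρ₁ - ρ₂` and `w = u₁ - u₂` and consider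
`E(t) = ∫ ρ₁ |w|² + 2 κ² |∇r|² + r²` over a period cell. Differentiating in time, the third order
capillary terms `∓ 4 κ² ρ₁ w · ∇Δr` coming from the first two summands cancel up to a divergence,
and `r²` controls the pressure without any monotonicity of the law. What remains is a nonpositive
viscous term and products of two of the quantities `r`, `∇r`, `w`, each of which is pointwise of the
order of the square root of the integrand. Hence `E' ≤ C E` with `E(0) = 0`, and `E = 0`.
-/

open scoped ContDiff

namespace VectorCalculus

variable {k A ι : Type*} [CommRing k] [CommRing A] [Algebra k A]

section Operators

variable (δ : ι → Derivation k A A)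

/-- The gradient `∇f` of an element `f`, with respect to the partial derivatives `δ i`. -/
def grad : A →ₗ[k] ι → A := LinearMap.pi fun i => (δ i : A →ₗ[k] A)

/-- Twice the symmetric part of the Jacobian, `2 (Du)ᵢⱼ = ∂ⱼuᵢ + ∂ᵢuⱼ`; the factor avoids dividing
by two in `A`. -/
def strain (u : ι → A) : ι → ι → A := fun i j => δ j (u i) + δ i (u j)

variable [Fintype ι]

/-- The divergence `div F` of a vector field `F`. -/
def div : (ι → A) →ₗ[k] A := ∑ j, (δ j : A →ₗ[k] A) ∘ₗ LinearMap.proj j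

/-- The Laplacian `Δ = div ∇`. -/
def lap : A →ₗ[k] A := div δ ∘ₗ grad δ

/-- The material derivative `∂ₜ + u · ∇` along the velocity field `u`. -/
def materialDeriv (δₜ : Derivation k A A) (u : ι → A) : Derivation k A A :=
  δₜ + ∑ j, u j • δ j

/-- The left-hand side `∂ₜρ + div (ρ u)` of the conservation of mass. -/
def massResidual (δₜ : Derivation k A A) (ρ : A) (u : ι → A) : A := δₜ ρ + div δ (ρ • u)

end Operators

section ProductRules

variable (δ : ι → Derivation k A A)

@[simp] lemma grad_apply (f : A) (i : ι) : grad δ f i = δ i f := rfl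

lemma grad_mul (f g : A) : grad δ (f * g) = f • grad δ g + g • grad δ f := by
  ext i
  simp

lemma strain_sub (u v : ι → A) (i : ι) : strain δ (u - v) i = strain δ u i - strain δ v i := by
  ext j
  simp only [strain, Pi.sub_apply, map_sub]
  ring

variable [Fintype ι]

lemma div_apply (F : ι → A) : div δ F = ∑ j, δ j (F j) := by
  simp [div]

lemma div_smul (a : A) (F : ι → A) : div δ (a • F) = grad δ a ⬝ᵥ F + a * div δ F := by
  simp only [div_apply, dotProduct, Finset.mul_sum, ← Finset.sum_add_distrib, Pi.smul_apply,
    smul_eq_mul, Derivation.leibniz, grad_apply]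
  exact Finset.sum_congr rfl fun j _ => by ring

lemma div_sum_smul (w : ι → A) (M : ι → ι → A) :
    div δ (∑ i, w i • M i) = w ⬝ᵥ (fun i => div δ (M i)) + ∑ i, grad δ (w i) ⬝ᵥ M i := by
  rw [map_sum, dotProduct, ← Finset.sum_add_distrib]
  exact Finset.sum_congr rfl fun i _ => by rw [div_smul, add_comm]

lemma two_mul_sum_grad_dotProduct_strain (w : ι → A) :
    2 * ∑ i, grad δ (w i) ⬝ᵥ strain δ w i = ∑ i, ∑ j, strain δ w i j ^ 2 := by
  have hsymm : ∑ i, ∑ j, δ j (w i) * strain δ w i j = ∑ i, ∑ j, δ i (w j) * strain δ w i j := by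
    rw [Finset.sum_comm]
    simp only [strain, add_comm]
  calc 2 * ∑ i, grad δ (w i) ⬝ᵥ strain δ w i
      = ∑ i, ∑ j, δ j (w i) * strain δ w i j + ∑ i, ∑ j, δ i (w j) * strain δ w i j := by
        rw [← hsymm, two_mul]
        rfl
    _ = ∑ i, ∑ j, strain δ w i j ^ 2 := by
        simp only [← Finset.sum_add_distrib, ← add_mul, sq]
        rfl

lemma derivation_dotProduct_self (D : Derivation k A A) (w : ι → A) :
    D (w ⬝ᵥ w) = 2 * (w ⬝ᵥ fun i => D (w i)) := by
  simp only [dotProduct, map_sum, Derivation.leibniz, smul_eq_mul, Finset.mul_sum, two_mul]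

lemma materialDeriv_apply (δₜ : Derivation k A A) (u : ι → A) (f : A) :
    materialDeriv δ δₜ u f = δₜ f + u ⬝ᵥ grad δ f := by
  have hsum : (∑ j, u j • δ j) f = ∑ j, u j * δ j f :=
    (congrFun (map_sum (Derivation.coeFnAddMonoidHom : Derivation k A A →+ A → A) _ _) f).trans
      (Finset.sum_apply _ _ _)
  rw [materialDeriv, Derivation.add_apply, hsum, dotProduct]
  simp only [grad_apply]

lemma massResidual_sub (δₜ : Derivation k A A) (ρ₁ ρ₂ : A) (u₁ u₂ : ι → A) :
    massResidual δ δₜ ρ₁ u₁ - massResidual δ δₜ ρ₂ u₂ =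
      δₜ (ρ₁ - ρ₂) + div δ (ρ₁ • (u₁ - u₂)) + div δ ((ρ₁ - ρ₂) • u₂) := by
  simp only [massResidual, smul_sub, sub_smul, map_sub]
  ring

lemma transport_mul (δₜ : Derivation k A A) (ρ a : A) (u : ι → A) :
    δₜ (ρ * a) + div δ ((ρ * a) • u) =
      ρ * materialDeriv δ δₜ u a + a * massResidual δ δₜ ρ u := by
  rw [massResidual, mul_comm ρ a, mul_smul, div_smul, materialDeriv_apply, Derivation.leibniz,
    smul_eq_mul, smul_eq_mul, dotProduct_smul, dotProduct_comm, smul_eq_mul]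
  ring

lemma div_lap_smul_sub_div_smul_grad (r : A) (m : ι → A) :
    div δ (lap δ r • m - div δ m • grad δ r) =
      m ⬝ᵥ grad δ (lap δ r) - grad δ r ⬝ᵥ grad δ (div δ m) := by
  rw [map_sub, div_smul, div_smul, show div δ (grad δ r) = lap δ r from rfl,
    dotProduct_comm m, dotProduct_comm (grad δ r)]
  ring

lemma derivation_grad_dotProduct_self {D : Derivation k A A}
    (hD : ∀ i f, D (δ i f) = δ i (D f)) (r : A) :
    D (grad δ r ⬝ᵥ grad δ r) = 2 * (grad δ r ⬝ᵥ grad δ (D r)) := by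
  simp only [derivation_dotProduct_self, grad_apply, hD]
  rfl

variable {δ}

lemma two_mul_grad_dotProduct_grad_div_smul (hδ : ∀ i j f, δ i (δ j f) = δ j (δ i f)) (r : A)
    (v : ι → A) :
    2 * (grad δ r ⬝ᵥ grad δ (div δ (r • v))) =
      div δ ((grad δ r ⬝ᵥ grad δ r) • v) + (grad δ r ⬝ᵥ grad δ r) * div δ v
        + 2 * ∑ i, ∑ j, δ i r * δ j r * δ i (v j) + 2 * (r * (grad δ r ⬝ᵥ grad δ (div δ v))) := by
  have hadv : grad δ (grad δ r ⬝ᵥ grad δ r) ⬝ᵥ v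
      = 2 * ∑ i, ∑ j, δ i r * (v j * δ i (δ j r)) := by
    simp only [dotProduct, grad_apply, map_sum, Derivation.leibniz, smul_eq_mul,
      Finset.mul_sum, Finset.sum_mul]
    rw [Finset.sum_comm]
    exact Finset.sum_congr rfl fun i _ => Finset.sum_congr rfl fun j _ => by rw [hδ j i]; ring
  have hgrad : grad δ r ⬝ᵥ grad δ (grad δ r ⬝ᵥ v)
      = ∑ i, ∑ j, δ i r * δ j r * δ i (v j) + ∑ i, ∑ j, δ i r * (v j * δ i (δ j r)) := by
    simp only [dotProduct, grad_apply, map_sum, Derivation.leibniz, smul_eq_mul,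
      Finset.mul_sum, ← Finset.sum_add_distrib]
    exact Finset.sum_congr rfl fun i _ => Finset.sum_congr rfl fun j _ => by ring
  rw [div_smul, div_smul, hadv, map_add, grad_mul, dotProduct_add, dotProduct_add, hgrad,
    dotProduct_smul, dotProduct_smul, smul_eq_mul, smul_eq_mul]
  ring

end ProductRules

section RelativeEnergy

variable (δ : ι → Derivation k A A) (δₜ : Derivation k A A) (ν K : k) (ρ r : A) (u v w f : ι → A)
variable [Fintype ι]

/-- Twice the relative energy density `ρ|w|² + K|∇r|² + r²` of two capillary fluids, where `r` and
`w` are the differences of their densities and of their velocities, and `K = 2κ²`. -/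
def relativeEnergy : A := ρ * (w ⬝ᵥ w) + K • (grad δ r ⬝ᵥ grad δ r) + r * r

/-- The momentum balance without pressure in non-conservative form,
`ρ (∂ₜ + u · ∇)w − 2ν div (ρ Dw) − K ρ ∇Δr`. It is linear in `(r, w)` for a fixed transporting flow
`(ρ, u)`, and `(ρ, u)` solves the momentum equation when `(r, w) = (ρ, u)` balances the pressure. -/
def momentumOp (ν K : k) (ρ : A) (u : ι → A) (r : A) (w : ι → A) : ι → A := fun i =>
  ρ * materialDeriv δ δₜ u (w i) - ν • div δ (ρ • strain δ w i) - K • (ρ * δ i (lap δ r))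

lemma momentumOp_sub (r₁ r₂ : A) (w₁ w₂ : ι → A) :
    momentumOp δ δₜ ν K ρ u (r₁ - r₂) (w₁ - w₂) =
      momentumOp δ δₜ ν K ρ u r₁ w₁ - momentumOp δ δₜ ν K ρ u r₂ w₂ := by
  ext i
  simp only [momentumOp, Pi.sub_apply, map_sub, strain_sub, smul_sub, mul_sub]
  ring

lemma mul_momentumOp_sub_mul_momentumOp (ρ₁ ρ₂ : A) (u₁ u₂ : ι → A) (i : ι) :
    ρ₂ * momentumOp δ δₜ ν K ρ₁ u₁ r w i - ρ₁ * momentumOp δ δₜ ν K ρ₂ u₂ r w i =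
      ρ₁ * ρ₂ * ((u₁ - u₂) ⬝ᵥ grad δ (w i))
        - ν • ((ρ₂ • grad δ (ρ₁ - ρ₂) - (ρ₁ - ρ₂) • grad δ ρ₂) ⬝ᵥ strain δ w i) := by
  simp only [momentumOp, materialDeriv_apply, div_smul, sub_dotProduct, smul_dotProduct, map_sub,
    Algebra.smul_def (R := k) (A := A), smul_eq_mul]
  ring

/-- The flux whose divergence occurs in the balance of `relativeEnergy` for two flows of velocities
`u` and `v`. -/
def relativeFlux : ι → A :=
  -((ρ * (w ⬝ᵥ w)) • u) + (2 * ν) • ∑ i, w i • ρ • strain δ w i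
    + (2 * K) • (lap δ r • ρ • w - div δ (ρ • w) • grad δ r)
    - K • ((grad δ r ⬝ᵥ grad δ r) • v) - (2 : k) • (r • ρ • w)

/-- The part of the balance of `relativeEnergy` which is quadratic in the differences `r`, `∇r`, `w`
and in the force `f` acting on `w`. -/
def relativeRemainder : A :=
  2 * (w ⬝ᵥ f) + 2 * (ρ * (w ⬝ᵥ grad δ r)) - 2 * (r * div δ (r • v))
    - K • ((grad δ r ⬝ᵥ grad δ r) * div δ v + 2 * ∑ i, ∑ j, δ i r * δ j r * δ i (v j)
      + 2 * (r * (grad δ r ⬝ᵥ grad δ (div δ v))))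

lemma dotProduct_momentumOp :
    w ⬝ᵥ momentumOp δ δₜ ν K ρ u r w =
      ρ * (w ⬝ᵥ fun i => materialDeriv δ δₜ u (w i))
        - ν • (w ⬝ᵥ fun i => div δ (ρ • strain δ w i)) - K • ((ρ • w) ⬝ᵥ grad δ (lap δ r)) := by
  simp only [momentumOp, dotProduct, mul_sub, Finset.sum_sub_distrib, Finset.mul_sum,
    Finset.smul_sum, mul_smul_comm, Pi.smul_apply, smul_eq_mul, grad_apply, mul_left_comm,
    mul_assoc]

lemma deriv_kineticEnergy :
    δₜ (ρ * (w ⬝ᵥ w)) =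
      div δ (-((ρ * (w ⬝ᵥ w)) • u) + (2 * ν) • ∑ i, w i • ρ • strain δ w i)
      - ν • (ρ * ∑ i, ∑ j, strain δ w i j ^ 2)
      + (2 * K) • ((ρ • w) ⬝ᵥ grad δ (lap δ r))
      + 2 * (w ⬝ᵥ momentumOp δ δₜ ν K ρ u r w)
      + (w ⬝ᵥ w) * massResidual δ δₜ ρ u := by
  have htransport := transport_mul δ δₜ ρ (w ⬝ᵥ w) u
  have hviscous := div_sum_smul δ w (fun i => ρ • strain δ w i)
  have hstrain : ρ * ∑ i, ∑ j, strain δ w i j ^ 2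
      = 2 * ∑ i, grad δ (w i) ⬝ᵥ (ρ • strain δ w i) := by
    simp only [← two_mul_sum_grad_dotProduct_strain, dotProduct_smul, smul_eq_mul,
      ← Finset.mul_sum, mul_left_comm]
  rw [derivation_dotProduct_self] at htransport
  rw [dotProduct_momentumOp, hstrain, map_add, map_neg, LinearMap.map_smul (div δ) (2 * ν),
    hviscous]
  simp only [Algebra.smul_def (R := k) (A := A), map_mul, map_ofNat]
  linear_combination htransport

variable {δ δₜ}

lemma deriv_capillaryEnergy (hδ : ∀ i j g, δ i (δ j g) = δ j (δ i g))
    (hδₜ : ∀ i g, δₜ (δ i g) = δ i (δₜ g)) :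
    K • δₜ (grad δ r ⬝ᵥ grad δ r) =
      div δ ((2 * K) • (lap δ r • ρ • w - div δ (ρ • w) • grad δ r)
        - K • ((grad δ r ⬝ᵥ grad δ r) • v))
      - (2 * K) • ((ρ • w) ⬝ᵥ grad δ (lap δ r))
      - K • ((grad δ r ⬝ᵥ grad δ r) * div δ v + 2 * ∑ i, ∑ j, δ i r * δ j r * δ i (v j)
        + 2 * (r * (grad δ r ⬝ᵥ grad δ (div δ v))))
      + (2 * K) • (grad δ r ⬝ᵥ grad δ (δₜ r + div δ (ρ • w) + div δ (r • v))) := by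
  have hconv := two_mul_grad_dotProduct_grad_div_smul hδ r v
  rw [derivation_grad_dotProduct_self _ hδₜ, map_sub, LinearMap.map_smul (div δ) (2 * K),
    LinearMap.map_smul (div δ) K, div_lap_smul_sub_div_smul_grad, map_add, map_add,
    dotProduct_add, dotProduct_add]
  simp only [Algebra.smul_def (R := k) (A := A), map_mul, map_ofNat]
  linear_combination -algebraMap k A K * hconv

lemma deriv_densityEnergy :
    δₜ (r * r) = -div δ ((2 : k) • (r • ρ • w)) + 2 * (ρ * (w ⬝ᵥ grad δ r))
      - 2 * (r * div δ (r • v)) + 2 * (r * (δₜ r + div δ (ρ • w) + div δ (r • v))) := by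
  rw [LinearMap.map_smul (div δ) (2 : k), div_smul δ r (ρ • w), dotProduct_smul,
    dotProduct_comm (grad δ r), Derivation.leibniz]
  simp only [Algebra.smul_def (R := k) (A := A), map_ofNat, smul_eq_mul]
  ring

theorem deriv_relativeEnergy (hδ : ∀ i j g, δ i (δ j g) = δ j (δ i g))
    (hδₜ : ∀ i g, δₜ (δ i g) = δ i (δₜ g)) :
    δₜ (relativeEnergy δ K ρ r w) =
      div δ (relativeFlux δ ν K ρ r u v w) - ν • (ρ * ∑ i, ∑ j, strain δ w i j ^ 2)
      + relativeRemainder δ K ρ r v w (momentumOp δ δₜ ν K ρ u r w)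
      + (w ⬝ᵥ w) * massResidual δ δₜ ρ u
      + (2 * K) • (grad δ r ⬝ᵥ grad δ (δₜ r + div δ (ρ • w) + div δ (r • v)))
      + 2 * (r * (δₜ r + div δ (ρ • w) + div δ (r • v))) := by
  rw [relativeEnergy, relativeFlux, relativeRemainder, map_add, map_add, Derivation.map_smul,
    deriv_kineticEnergy δ δₜ ν K ρ r u w, deriv_capillaryEnergy K ρ r v w hδ hδₜ,
    deriv_densityEnergy (δ := δ) (δₜ := δₜ) ρ r v w]
  simp only [map_sub, map_add]
  ring

lemma relativeRemainder_mem_sq {I : Ideal A} (hr : r ∈ I) (hgrad : ∀ i, δ i r ∈ I)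
    (hw : ∀ i, w i ∈ I) (hf : ∀ i, f i ∈ I) : relativeRemainder δ K ρ r v w f ∈ I ^ 2 := by
  have hmul {a b : A} (ha : a ∈ I) (hb : b ∈ I) : a * b ∈ I ^ 2 := sq I ▸ Ideal.mul_mem_mul ha hb
  have hdot {a b : ι → A} (ha : ∀ i, a i ∈ I) (hb : ∀ i, b i ∈ I) : a ⬝ᵥ b ∈ I ^ 2 :=
    sum_mem fun i _ => hmul (ha i) (hb i)
  have hdiv : div δ (r • v) ∈ I := by
    rw [div_smul]
    exact add_mem (sum_mem fun i _ => I.mul_mem_right _ (hgrad i)) (I.mul_mem_right _ hr)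
  have hstretch : ∑ i, ∑ j, δ i r * δ j r * δ i (v j) ∈ I ^ 2 :=
    sum_mem fun i _ => sum_mem fun j _ => Ideal.mul_mem_right _ _ (hmul (hgrad i) (hgrad j))
  have hdilate : r * (grad δ r ⬝ᵥ grad δ (div δ v)) ∈ I ^ 2 :=
    hmul hr (sum_mem fun i _ => I.mul_mem_right _ (hgrad i))
  refine sub_mem (sub_mem (add_mem ?_ ?_) ?_) (Submodule.smul_of_tower_mem _ K
    (add_mem (add_mem ?_ ?_) ?_))
  · exact Ideal.mul_mem_left _ _ (hdot hw hf)
  · exact Ideal.mul_mem_left _ _ (Ideal.mul_mem_left _ _ (hdot hw hgrad))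
  · exact Ideal.mul_mem_left _ _ (hmul hr hdiv)
  · exact Ideal.mul_mem_right _ _ (hdot hgrad hgrad)
  · exact Ideal.mul_mem_left _ _ hstretch
  · exact Ideal.mul_mem_left _ _ hdilate

end RelativeEnergy

end VectorCalculus

lemma nonpos_of_hasDerivAt_le_mul {E E' : ℝ → ℝ} {a b C : ℝ} (hcont : ContinuousOn E (Set.Icc a b))
    (hderiv : ∀ t ∈ Set.Ioo a b, HasDerivAt E (E' t) t) (ha : E a ≤ 0)
    (hle : ∀ t ∈ Set.Ioo a b, E' t ≤ C * E t) : ∀ t ∈ Set.Icc a b, E t ≤ 0 := by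
  have hderiv_exp : ∀ t ∈ Set.Ioo a b, HasDerivAt (fun s => E s * Real.exp (-C * s))
      (E' t * Real.exp (-C * t) + E t * (Real.exp (-C * t) * (-C * 1))) t := fun t ht =>
    (hderiv t ht).mul ((hasDerivAt_id t).const_mul (-C)).exp
  have hanti : AntitoneOn (fun s => E s * Real.exp (-C * s)) (Set.Icc a b) := by
    refine antitoneOn_of_hasDerivWithinAt_nonpos (convex_Icc a b) (by fun_prop)
      (fun t ht => (hderiv_exp t (interior_Icc.subset ht)).hasDerivWithinAt) fun t ht => ?_
    have := hle t (interior_Icc.subset ht)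
    nlinarith [Real.exp_pos (-C * t)]
  intro t ht
  have hat : E t * Real.exp (-C * t) ≤ E a * Real.exp (-C * a) :=
    hanti (Set.left_mem_Icc.2 (ht.1.trans ht.2)) ht ht.1
  exact nonpos_of_mul_nonpos_left
    (hat.trans (mul_nonpos_of_nonpos_of_nonneg ha (Real.exp_pos _).le)) (Real.exp_pos _)

/-- The smooth functions of `(t, x) ∈ ℝ × ℝᵈ` that are `ℤᵈ`-periodic in `x`, as a subalgebra of all
functions. -/
def smoothPeriodicSubalgebra (d : ℕ) : Subalgebra ℝ (ℝ × (Fin d → ℝ) → ℝ) where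
  carrier := {f | ContDiff ℝ ∞ f ∧
    ∀ t x (k : Fin d → ℤ), f (t, x + fun i => (k i : ℝ)) = f (t, x)}
  mul_mem' := by
    rintro f g ⟨hf, hfper⟩ ⟨hg, hgper⟩
    exact ⟨hf.mul hg, fun t x k => by simp only [Pi.mul_apply, hfper, hgper]⟩
  add_mem' := by
    rintro f g ⟨hf, hfper⟩ ⟨hg, hgper⟩
    exact ⟨hf.add hg, fun t x k => by simp only [Pi.add_apply, hfper, hgper]⟩
  algebraMap_mem' _ := ⟨contDiff_const, fun _ _ _ => rfl⟩

/-- The algebra of time-dependent scalar fields on the torus `Tᵈ`. It is kept apart from the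
coercion of `smoothPeriodicSubalgebra d` so that its algebraic structure is sealed. -/
def SmoothPeriodic (d : ℕ) : Type := smoothPeriodicSubalgebra d

instance (d : ℕ) : CommRing (SmoothPeriodic d) :=
  inferInstanceAs (CommRing (smoothPeriodicSubalgebra d))

instance (d : ℕ) : Algebra ℝ (SmoothPeriodic d) :=
  inferInstanceAs (Algebra ℝ (smoothPeriodicSubalgebra d))

namespace SmoothPeriodic

open Asymptotics Filter VectorCalculus

variable {d : ℕ}

/-- The scalar field given by a curried function of time and space. -/
def ofCurried (f : ℝ → (Fin d → ℝ) → ℝ) (hf : ContDiff ℝ ∞ fun z : ℝ × (Fin d → ℝ) => f z.1 z.2)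
    (hper : ∀ t x (k : Fin d → ℤ), f t (x + fun i => (k i : ℝ)) = f t x) : SmoothPeriodic d :=
  ⟨fun z => f z.1 z.2, hf, hper⟩

/-- Evaluation of scalar fields at a point of space-time. -/
def evalAt (z : ℝ × (Fin d → ℝ)) : SmoothPeriodic d →ₐ[ℝ] ℝ :=
  (Pi.evalAlgHom ℝ _ z).comp (smoothPeriodicSubalgebra d).val

lemma ext_evalAt {f g : SmoothPeriodic d} (h : ∀ z, evalAt z f = evalAt z g) : f = g :=
  Subtype.ext (funext h)

section Differentiation

lemma contDiff_evalAt (f : SmoothPeriodic d) : ContDiff ℝ ∞ fun z => evalAt z f := f.2.1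

lemma continuous_evalAt (f : SmoothPeriodic d) : Continuous fun z => evalAt z f :=
  f.contDiff_evalAt.continuous

lemma differentiable_evalAt (f : SmoothPeriodic d) : Differentiable ℝ fun z => evalAt z f :=
  f.contDiff_evalAt.differentiable (by simp)

lemma evalAt_add_intCast (f : SmoothPeriodic d) (t : ℝ) (x : Fin d → ℝ) (k : Fin d → ℤ) :
    evalAt (t, x + fun i => (k i : ℝ)) f = evalAt (t, x) f := f.2.2 t x k

lemma fderiv_evalAt_add_intCast (f : SmoothPeriodic d) (t : ℝ) (x : Fin d → ℝ) (k : Fin d → ℤ) :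
    fderiv ℝ (fun z => evalAt z f) (t, x + fun i => (k i : ℝ)) =
      fderiv ℝ (fun z => evalAt z f) (t, x) := by
  have hper : (fun z => evalAt (z + (0, fun i => (k i : ℝ))) f) = fun z => evalAt z f :=
    funext fun z => by
      simpa only [Prod.add_def, add_zero] using f.evalAt_add_intCast z.1 z.2 k
  calc fderiv ℝ (fun z => evalAt z f) (t, x + fun i => (k i : ℝ))
      = fderiv ℝ (fun z => evalAt z f) ((t, x) + (0, fun i => (k i : ℝ))) := by simp
    _ = fderiv ℝ (fun z => evalAt z f) (t, x) := by
      rw [← fderiv_comp_add_right, hper]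

/-- The derivative in the direction `v` of space-time. -/
def dirDeriv (v : ℝ × (Fin d → ℝ)) : Derivation ℝ (SmoothPeriodic d) (SmoothPeriodic d) :=
  Derivation.mk'
    { toFun f := ⟨fun z => fderiv ℝ (fun z => evalAt z f) z v,
        (f.contDiff_evalAt.fderiv_right (m := ∞) (by simp)).clm_apply contDiff_const,
        fun t x k => by simp only [fderiv_evalAt_add_intCast]⟩
      map_add' f g := Subtype.ext <| funext fun z => congrArg (· v) <|
        fderiv_add (f.differentiable_evalAt z) (g.differentiable_evalAt z)
      map_smul' c f := Subtype.ext <| funext fun z => congrArg (· v) <|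
        fderiv_const_smul (f.differentiable_evalAt z) c }
    fun f g => Subtype.ext <| funext fun z => congrArg (· v) <|
      fderiv_mul (f.differentiable_evalAt z) (g.differentiable_evalAt z)

lemma evalAt_dirDeriv (v z : ℝ × (Fin d → ℝ)) (f : SmoothPeriodic d) :
    evalAt z (dirDeriv v f) = fderiv ℝ (fun z => evalAt z f) z v := rfl

lemma dirDeriv_comm (v w : ℝ × (Fin d → ℝ)) (f : SmoothPeriodic d) :
    dirDeriv v (dirDeriv w f) = dirDeriv w (dirDeriv v f) := by
  refine ext_evalAt fun z => ?_
  have hfderiv : DifferentiableAt ℝ (fderiv ℝ fun z => evalAt z f) z :=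
    (f.contDiff_evalAt.fderiv_right (m := ∞) (by simp)).differentiable (by simp) z
  have hsecond (v w : ℝ × (Fin d → ℝ)) : evalAt z (dirDeriv v (dirDeriv w f)) =
      fderiv ℝ (fderiv ℝ fun z => evalAt z f) z v w := by
    simp only [evalAt_dirDeriv]
    rw [fderiv_clm_apply hfderiv (differentiableAt_const _)]
    simp
  rw [hsecond, hsecond]
  exact (f.contDiff_evalAt.contDiffAt.isSymmSndFDerivAt (by
    rw [minSmoothness_of_isRCLikeNormedField]
    exact WithTop.coe_le_coe.2 le_top)).eq v w

/-- The time derivative `∂ₜ`. -/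
def dt : Derivation ℝ (SmoothPeriodic d) (SmoothPeriodic d) := dirDeriv (1, 0)

/-- The partial derivative `∂ᵢ` in space. -/
def dx (i : Fin d) : Derivation ℝ (SmoothPeriodic d) (SmoothPeriodic d) :=
  dirDeriv (0, Pi.single i 1)

lemma dt_dx (i : Fin d) (f : SmoothPeriodic d) : dt (dx i f) = dx i (dt f) := dirDeriv_comm _ _ _

lemma dx_dx (i j : Fin d) (f : SmoothPeriodic d) : dx i (dx j f) = dx j (dx i f) :=
  dirDeriv_comm _ _ _

lemma hasDerivAt_evalAt (f : SmoothPeriodic d) (t : ℝ) (x : Fin d → ℝ) :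
    HasDerivAt (fun s => evalAt (s, x) f) (evalAt (t, x) (dt f)) t :=
  (f.differentiable_evalAt (t, x)).hasFDerivAt.comp_hasDerivAt t
    ((hasDerivAt_id t).prodMk (hasDerivAt_const t x))

lemma hasFDerivAt_evalAt (f : SmoothPeriodic d) (t : ℝ) (x : Fin d → ℝ) :
    HasFDerivAt (fun y => evalAt (t, y) f)
      ((fderiv ℝ (fun z => evalAt z f) (t, x)).comp (.inr ℝ ℝ (Fin d → ℝ))) x :=
  (f.differentiable_evalAt (t, x)).hasFDerivAt.comp x (hasFDerivAt_prodMk_right t x)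

lemma fderiv_evalAt_single (f : SmoothPeriodic d) (t : ℝ) (x : Fin d → ℝ) (i : Fin d) :
    fderiv ℝ (fun y => evalAt (t, y) f) x (Pi.single i 1) = evalAt (t, x) (dx i f) := by
  rw [(f.hasFDerivAt_evalAt t x).fderiv]
  rfl

lemma evalAt_dx_eq_zero {f : SmoothPeriodic d} {t : ℝ} (hf : ∀ x, evalAt (t, x) f = 0) (i : Fin d)
    (x : Fin d → ℝ) : evalAt (t, x) (dx i f) = 0 := by
  simp [← fderiv_evalAt_single, hf]

end Differentiation

section UnitCube

lemma exists_mem_Icc_evalAt_eq (x : Fin d → ℝ) :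
    ∃ y ∈ Set.Icc (0 : Fin d → ℝ) 1, ∀ (f : SmoothPeriodic d) (t : ℝ),
      evalAt (t, y) f = evalAt (t, x) f := by
  refine ⟨x + fun i => ((-⌊x i⌋ : ℤ) : ℝ), ⟨fun i => ?_, fun i => ?_⟩,
    fun f t => f.evalAt_add_intCast t x _⟩
  · simpa using Int.floor_le (x i)
  · simpa [add_comm] using (Int.lt_floor_add_one (x i)).le

lemma exists_abs_evalAt_le (f : SmoothPeriodic d) (a b : ℝ) :
    ∃ M, ∀ t ∈ Set.Icc a b, ∀ x, |evalAt (t, x) f| ≤ M := by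
  obtain ⟨M, hM⟩ := (isCompact_Icc.prod isCompact_Icc).exists_bound_of_continuousOn
    (s := Set.Icc a b ×ˢ Set.Icc (0 : Fin d → ℝ) 1) f.continuous_evalAt.continuousOn
  refine ⟨M, fun t ht x => ?_⟩
  obtain ⟨y, hy, hxy⟩ := exists_mem_Icc_evalAt_eq x
  exact hxy f t ▸ hM (t, y) ⟨ht, hy⟩

lemma continuous_evalAt_slice (f : SmoothPeriodic d) (t : ℝ) :
    Continuous fun x => evalAt (t, x) f :=
  f.continuous_evalAt.comp (by fun_prop)

lemma integrableOn_evalAt (f : SmoothPeriodic d) (t : ℝ) :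
    IntegrableOn (fun x => evalAt (t, x) f) (Set.Icc 0 1) :=
  (f.continuous_evalAt_slice t).continuousOn.integrableOn_compact isCompact_Icc

lemma integral_div_eq_zero (F : Fin d → SmoothPeriodic d) (t : ℝ) :
    ∫ x in Set.Icc 0 1, evalAt (t, x) (div dx F) = 0 := by
  obtain _ | n := d
  · simp [div_apply]
  have hdiv (x : Fin (n + 1) → ℝ) : evalAt (t, x) (div dx F) =
      ∑ i, ((fderiv ℝ (fun z => evalAt z (F i)) (t, x)).comp
        (.inr ℝ ℝ (Fin (n + 1) → ℝ))) (Pi.single i 1) := by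
    rw [div_apply, map_sum]
    rfl
  have hfaces (i : Fin (n + 1)) (y : Fin n → ℝ) :
      evalAt (t, i.insertNth 1 y) (F i) = evalAt (t, i.insertNth 0 y) (F i) := by
    rw [← (F i).evalAt_add_intCast t (i.insertNth 0 y) (Pi.single i 1)]
    congr 3
    ext j
    refine Fin.succAboveCases i ?_ (fun k => ?_) j <;> simp
  have hint := integrableOn_evalAt (div dx F) t
  simp only [hdiv] at hint ⊢
  rw [integral_divergence_of_hasFDerivAt_off_countable' 0 1 zero_le_one
    (fun i x => evalAt (t, x) (F i)) _ ∅ Set.countable_empty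
    (fun i => ((F i).continuous_evalAt_slice t).continuousOn)
    (fun x _ i => (F i).hasFDerivAt_evalAt t x) hint]
  exact Finset.sum_eq_zero fun i _ => by simp only [Pi.one_apply, Pi.zero_apply, hfaces, sub_self]

lemma hasDerivAt_integral (f : SmoothPeriodic d) (t : ℝ) :
    HasDerivAt (fun s => ∫ x in Set.Icc 0 1, evalAt (s, x) f)
      (∫ x in Set.Icc 0 1, evalAt (t, x) (dt f)) t := by
  obtain ⟨M, hM⟩ := (dt f).exists_abs_evalAt_le (t - 1) (t + 1)
  exact (hasDerivAt_integral_of_dominated_loc_of_deriv_le (bound := fun _ => M)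
    (F := fun s x => evalAt (s, x) f) (F' := fun s x => evalAt (s, x) (dt f))
    (Icc_mem_nhds (by linarith) (by linarith))
    (.of_forall fun s => (f.integrableOn_evalAt s).aestronglyMeasurable) (f.integrableOn_evalAt t)
    ((dt f).integrableOn_evalAt t).aestronglyMeasurable
    (.of_forall fun x s hs => hM s hs x)
    (integrableOn_const isCompact_Icc.measure_ne_top)
    (.of_forall fun x s _ => f.hasDerivAt_evalAt s x)).2

lemma evalAt_eq_zero_of_integral_eq_zero {f : SmoothPeriodic d} {t : ℝ}
    (hf : ∀ x, 0 ≤ evalAt (t, x) f) (hint : ∫ x in Set.Icc 0 1, evalAt (t, x) f = 0)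
    (x : Fin d → ℝ) : evalAt (t, x) f = 0 := by
  have hcube : Set.Icc (0 : Fin d → ℝ) 1 ⊆ closure (interior (Set.Icc 0 1)) := by
    rw [(convex_Icc (𝕜 := ℝ) (0 : Fin d → ℝ) 1).closure_interior_eq_closure_of_nonempty_interior]
    · exact subset_closure
    · rw [← Set.pi_univ_Icc, interior_pi_set Set.finite_univ]
      exact Set.univ_pi_nonempty_iff.2 fun _ => by simp
  have hae := (setIntegral_eq_zero_iff_of_nonneg_ae (.of_forall hf) (f.integrableOn_evalAt t)).1
    hint
  have heq := Measure.eqOn_of_ae_eq hae (f.continuous_evalAt_slice t).continuousOn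
    continuousOn_const hcube
  obtain ⟨y, hy, hxy⟩ := exists_mem_Icc_evalAt_eq x
  exact hxy f t ▸ heq hy

theorem eq_zero_of_dt_le_div_add_mul {e : SmoothPeriodic d} (F : Fin d → SmoothPeriodic d)
    {T C : ℝ} (hnonneg : ∀ t ∈ Set.Icc 0 T, ∀ x, 0 ≤ evalAt (t, x) e)
    (hinit : ∀ x, evalAt (0, x) e = 0)
    (hle : ∀ t ∈ Set.Ioo 0 T, ∀ x,
      evalAt (t, x) (dt e) ≤ evalAt (t, x) (div dx F) + C * evalAt (t, x) e) :
    ∀ t ∈ Set.Icc 0 T, ∀ x, evalAt (t, x) e = 0 := by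
  have hint_le : ∀ t ∈ Set.Ioo 0 T, ∫ x in Set.Icc 0 1, evalAt (t, x) (dt e) ≤
      C * ∫ x in Set.Icc 0 1, evalAt (t, x) e := fun t ht =>
    calc ∫ x in Set.Icc 0 1, evalAt (t, x) (dt e)
        ≤ ∫ x in Set.Icc 0 1, (evalAt (t, x) (div dx F) + C * evalAt (t, x) e) :=
          integral_mono (integrableOn_evalAt _ t)
            ((integrableOn_evalAt _ t).add ((integrableOn_evalAt e t).const_mul C)) (hle t ht)
      _ = C * ∫ x in Set.Icc 0 1, evalAt (t, x) e := by
          rw [integral_add (integrableOn_evalAt _ t) ((integrableOn_evalAt e t).const_mul C),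
            integral_div_eq_zero, integral_const_mul, zero_add]
  intro t ht
  refine evalAt_eq_zero_of_integral_eq_zero (hnonneg t ht) (le_antisymm ?_
    (integral_nonneg (hnonneg t ht)))
  exact nonpos_of_hasDerivAt_le_mul (fun s _ =>
    (e.hasDerivAt_integral s).continuousAt.continuousWithinAt)
    (fun s _ => e.hasDerivAt_integral s) (by simp [hinit]) hint_le t ht

end UnitCube

section BigO

lemma isBigO_evalAt_one (T : ℝ) (f : SmoothPeriodic d) :
    (fun z => evalAt z f) =O[𝓟 (Set.Ioo 0 T ×ˢ Set.univ)] fun _ => (1 : ℝ) := by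
  obtain ⟨M, hM⟩ := f.exists_abs_evalAt_le 0 T
  exact isBigO_principal.2 ⟨M, fun z hz => by
    simpa using hM z.1 (Set.Ioo_subset_Icc_self hz.1) z.2⟩

/-- The ideal of the scalar fields that are `O(g)` uniformly on `(0, T) × ℝᵈ`. -/
def bigOIdeal (T : ℝ) (g : ℝ × (Fin d → ℝ) → ℝ) : Ideal (SmoothPeriodic d) where
  carrier := {f | (fun z => evalAt z f) =O[𝓟 (Set.Ioo 0 T ×ˢ Set.univ)] g}
  add_mem' hf hf' := by simpa using hf.add hf'
  zero_mem' := by simpa using isBigO_zero _ _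
  smul_mem' a f hf := by simpa using (isBigO_evalAt_one T a).mul hf

variable {T c : ℝ} {g : ℝ × (Fin d → ℝ) → ℝ} {f : SmoothPeriodic d}

lemma mem_bigOIdeal :
    f ∈ bigOIdeal T g ↔ (fun z => evalAt z f) =O[𝓟 (Set.Ioo 0 T ×ˢ Set.univ)] g := Iff.rfl

lemma bigOIdeal_sqrt_sq_le (hg : ∀ t ∈ Set.Ioo 0 T, ∀ x, 0 ≤ g (t, x)) :
    bigOIdeal T (fun z => √(g z)) ^ 2 ≤ bigOIdeal T g := by
  rw [sq, Ideal.mul_le]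
  intro f hf f' hf'
  have hmul : (fun z => √(g z) * √(g z)) =ᶠ[𝓟 (Set.Ioo 0 T ×ˢ Set.univ)] g :=
    eventually_principal.2 fun z hz => Real.mul_self_sqrt (hg z.1 hz.1 z.2)
  simpa [mem_bigOIdeal] using (IsBigO.mul hf hf').trans_eventuallyEq hmul

lemma mem_bigOIdeal_sqrt_of_mul_sq_le (hc : 0 < c)
    (hf : ∀ t ∈ Set.Ioo 0 T, ∀ x, c * evalAt (t, x) f ^ 2 ≤ g (t, x)) :
    f ∈ bigOIdeal T fun z => √(g z) := by
  refine isBigO_principal.2 ⟨(√c)⁻¹, fun z hz => ?_⟩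
  have hsqrt : √c * |evalAt z f| ≤ √(g z) := by
    rw [← Real.sqrt_sq_eq_abs, ← Real.sqrt_mul hc.le]
    exact Real.sqrt_le_sqrt (hf z.1 hz.1 z.2)
  rwa [Real.norm_of_nonneg (Real.sqrt_nonneg _), Real.norm_eq_abs,
    ← div_eq_inv_mul, le_div_iff₀' (Real.sqrt_pos.2 hc)]

lemma mem_bigOIdeal_of_mul_mem {a : SmoothPeriodic d} (hc : 0 < c)
    (ha : ∀ t ∈ Set.Ioo 0 T, ∀ x, c ≤ evalAt (t, x) a) (hf : a * f ∈ bigOIdeal T g) :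
    f ∈ bigOIdeal T g := by
  refine IsBigO.trans (isBigO_principal.2 ⟨c⁻¹, fun z hz => ?_⟩) hf
  have hle : c * |evalAt z f| ≤ |evalAt z (a * f)| := by
    rw [map_mul, abs_mul]
    gcongr
    exact (ha z.1 hz.1 z.2).trans (le_abs_self _)
  rwa [Real.norm_eq_abs, Real.norm_eq_abs, ← div_eq_inv_mul, le_div_iff₀' hc]

end BigO

section Energy

variable (ρ r : SmoothPeriodic d) (w : Fin d → SmoothPeriodic d) (z : ℝ × (Fin d → ℝ)) {c K : ℝ}

lemma evalAt_relativeEnergy :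
    evalAt z (relativeEnergy dx K ρ r w) =
      evalAt z ρ * ∑ i, evalAt z (w i) ^ 2 + K * ∑ i, evalAt z (dx i r) ^ 2 + evalAt z r ^ 2 := by
  simp [relativeEnergy, dotProduct, sq]

variable {ρ z}

lemma mul_sq_le_relativeEnergy (hK : 0 ≤ K) (hc : 0 ≤ c) (hρ : c ≤ evalAt z ρ) (i : Fin d) :
    c * evalAt z (w i) ^ 2 ≤ evalAt z (relativeEnergy dx K ρ r w) := by
  have hi : evalAt z (w i) ^ 2 ≤ ∑ i, evalAt z (w i) ^ 2 :=
    Finset.single_le_sum (fun i _ => sq_nonneg (evalAt z (w i))) (Finset.mem_univ i)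
  rw [evalAt_relativeEnergy, add_assoc]
  exact le_add_of_le_of_nonneg (mul_le_mul hρ hi (sq_nonneg _) (hc.trans hρ)) (by positivity)

lemma mul_dx_sq_le_relativeEnergy (hK : 0 ≤ K) (hρ : 0 ≤ evalAt z ρ) (i : Fin d) :
    K * evalAt z (dx i r) ^ 2 ≤ evalAt z (relativeEnergy dx K ρ r w) := by
  have hi : evalAt z (dx i r) ^ 2 ≤ ∑ i, evalAt z (dx i r) ^ 2 :=
    Finset.single_le_sum (fun i _ => sq_nonneg (evalAt z (dx i r))) (Finset.mem_univ i)
  rw [evalAt_relativeEnergy, add_right_comm]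
  exact le_add_of_nonneg_of_le (by positivity) (mul_le_mul_of_nonneg_left hi hK)

lemma sq_le_relativeEnergy (hK : 0 ≤ K) (hρ : 0 ≤ evalAt z ρ) :
    evalAt z r ^ 2 ≤ evalAt z (relativeEnergy dx K ρ r w) := by
  rw [evalAt_relativeEnergy]
  exact le_add_of_nonneg_left (by positivity)

end Energy

end SmoothPeriodic

section Korteweg

open Asymptotics Filter SmoothPeriodic VectorCalculus

variable {d : ℕ} {ν K c T : ℝ} {p' : ℝ → ℝ}

/-- `(ρ, u)` is a smooth solution on `(0, T)` of the Navier–Stokes–Korteweg system on `Tᵈ` with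
`ρ ≥ c`, with viscosity `ν`, capillarity `K = 2κ²` and a pressure law of derivative `p'`. The
momentum equation is in non-conservative form. -/
structure IsKortewegSolution (ν K c T : ℝ) (p' : ℝ → ℝ) (ρ : SmoothPeriodic d)
    (u : Fin d → SmoothPeriodic d) : Prop where
  le_density : ∀ t ∈ Set.Icc 0 T, ∀ x, c ≤ evalAt (t, x) ρ
  mass : ∀ t ∈ Set.Ioo 0 T, ∀ x, evalAt (t, x) (massResidual dx dt ρ u) = 0
  momentum : ∀ t ∈ Set.Ioo 0 T, ∀ x i, evalAt (t, x) (momentumOp dx dt ν K ρ u ρ u i) =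
    -(p' (evalAt (t, x) ρ) * evalAt (t, x) (dx i ρ))

namespace IsKortewegSolution

variable {ρ ρ₁ ρ₂ : SmoothPeriodic d} {u u₁ u₂ : Fin d → SmoothPeriodic d}

lemma density_nonneg (h : IsKortewegSolution ν K c T p' ρ u) (hc : 0 ≤ c) :
    ∀ t ∈ Set.Icc 0 T, ∀ x, 0 ≤ evalAt (t, x) ρ := fun t ht x => hc.trans (h.le_density t ht x)

lemma exists_density_mem_Icc (h : IsKortewegSolution ν K c T p' ρ u) :
    ∃ M, ∀ N ≥ M, ∀ z ∈ Set.Ioo 0 T ×ˢ Set.univ, evalAt z ρ ∈ Set.Icc c N := by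
  obtain ⟨M, hM⟩ := ρ.exists_abs_evalAt_le 0 T
  refine ⟨M, fun N hN z hz => ?_⟩
  have ht : z.1 ∈ Set.Icc 0 T := Set.Ioo_subset_Icc_self hz.1
  exact ⟨h.le_density z.1 ht z.2, (le_abs_self _).trans ((hM z.1 ht z.2).trans hN)⟩

lemma isBigO_comp_density_one (h : IsKortewegSolution ν K c T p' ρ u) (hc : 0 < c)
    (hp' : ContinuousOn p' (Set.Ioi 0)) :
    (fun z => p' (evalAt z ρ)) =O[𝓟 (Set.Ioo 0 T ×ˢ Set.univ)] fun _ => (1 : ℝ) := by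
  obtain ⟨M, hM⟩ := h.exists_density_mem_Icc
  obtain ⟨B, hB⟩ := isCompact_Icc.exists_bound_of_continuousOn
    (hp'.mono fun a (ha : a ∈ Set.Icc c M) => hc.trans_le ha.1)
  exact isBigO_principal.2 ⟨B, fun z hz => by simpa using hB _ (hM M le_rfl z hz)⟩

lemma isBigO_comp_density_sub (h₁ : IsKortewegSolution ν K c T p' ρ₁ u₁)
    (h₂ : IsKortewegSolution ν K c T p' ρ₂ u₂) (hc : 0 < c) (hp' : ContDiffOn ℝ 1 p' (Set.Ioi 0)) :
    (fun z => p' (evalAt z ρ₁) - p' (evalAt z ρ₂)) =O[𝓟 (Set.Ioo 0 T ×ˢ Set.univ)]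
      fun z => evalAt z (ρ₁ - ρ₂) := by
  obtain ⟨M₁, hM₁⟩ := h₁.exists_density_mem_Icc
  obtain ⟨M₂, hM₂⟩ := h₂.exists_density_mem_Icc
  obtain ⟨L, hL⟩ := (hp'.mono fun a (ha : a ∈ Set.Icc c (max M₁ M₂)) =>
    hc.trans_le ha.1).exists_lipschitzOnWith one_ne_zero (convex_Icc _ _) isCompact_Icc
  refine isBigO_principal.2 ⟨L, fun z hz => ?_⟩
  rw [map_sub]
  exact hL.norm_sub_le (hM₁ _ (le_max_left _ _) z hz) (hM₂ _ (le_max_right _ _) z hz)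

variable {g : ℝ × (Fin d → ℝ) → ℝ}

lemma pressure_imbalance_mem_bigOIdeal (h₁ : IsKortewegSolution ν K c T p' ρ₁ u₁)
    (h₂ : IsKortewegSolution ν K c T p' ρ₂ u₂) (hc : 0 < c) (hp' : ContDiffOn ℝ 1 p' (Set.Ioi 0))
    (hr : ρ₁ - ρ₂ ∈ bigOIdeal T g) (i : Fin d) (hgrad : dx i (ρ₁ - ρ₂) ∈ bigOIdeal T g) :
    ρ₂ * momentumOp dx dt ν K ρ₁ u₁ ρ₁ u₁ i - ρ₁ * momentumOp dx dt ν K ρ₂ u₂ ρ₂ u₂ i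
      ∈ bigOIdeal T g := by
  have hdensity : (fun z => p' (evalAt z ρ₂) * evalAt z ((ρ₁ - ρ₂) * dx i ρ₂))
      =O[𝓟 (Set.Ioo 0 T ×ˢ Set.univ)] g := by
    simpa using (h₂.isBigO_comp_density_one hc hp'.continuousOn).mul
      ((bigOIdeal T g).mul_mem_right (dx i ρ₂) hr)
  have hgradient : (fun z => p' (evalAt z ρ₁) * evalAt z (ρ₂ * dx i (ρ₁ - ρ₂)))
      =O[𝓟 (Set.Ioo 0 T ×ˢ Set.univ)] g := by
    simpa using (h₁.isBigO_comp_density_one hc hp'.continuousOn).mul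
      ((bigOIdeal T g).mul_mem_left ρ₂ hgrad)
  have hlaw : (fun z => (p' (evalAt z ρ₁) - p' (evalAt z ρ₂)) * evalAt z (ρ₂ * dx i ρ₂))
      =O[𝓟 (Set.Ioo 0 T ×ˢ Set.univ)] g := by
    simpa using ((h₁.isBigO_comp_density_sub h₂ hc hp').trans hr).mul
      (isBigO_evalAt_one T (ρ₂ * dx i ρ₂))
  refine ((hdensity.sub hgradient).sub hlaw).congr' (eventually_principal.2 fun z hz => ?_) .rfl
  simp only [map_sub, map_mul, h₁.momentum z.1 hz.1 z.2 i, h₂.momentum z.1 hz.1 z.2 i]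
  ring

lemma momentumOp_sub_mem_bigOIdeal (h₁ : IsKortewegSolution ν K c T p' ρ₁ u₁)
    (h₂ : IsKortewegSolution ν K c T p' ρ₂ u₂) (hc : 0 < c) (hp' : ContDiffOn ℝ 1 p' (Set.Ioi 0))
    (hr : ρ₁ - ρ₂ ∈ bigOIdeal T g) (hgrad : ∀ i, dx i (ρ₁ - ρ₂) ∈ bigOIdeal T g)
    (hw : ∀ i, (u₁ - u₂) i ∈ bigOIdeal T g) (i : Fin d) :
    momentumOp dx dt ν K ρ₁ u₁ (ρ₁ - ρ₂) (u₁ - u₂) i ∈ bigOIdeal T g := by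
  set I := bigOIdeal T g
  have hconvection : ρ₁ * ρ₂ * ((u₁ - u₂) ⬝ᵥ VectorCalculus.grad dx (u₂ i)) ∈ I :=
    I.mul_mem_left _ (sum_mem fun j _ => I.mul_mem_right _ (hw j))
  have hviscosity : (ρ₂ • VectorCalculus.grad dx (ρ₁ - ρ₂) - (ρ₁ - ρ₂) • VectorCalculus.grad dx ρ₂)
      ⬝ᵥ strain dx u₂ i ∈ I :=
    sum_mem fun j _ => I.mul_mem_right _
      (sub_mem (I.mul_mem_left _ (hgrad j)) (I.mul_mem_right _ hr))
  refine mem_bigOIdeal_of_mul_mem hc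
    (fun t ht => h₂.le_density t (Set.Ioo_subset_Icc_self ht)) ?_
  have hsplit : ρ₂ * momentumOp dx dt ν K ρ₁ u₁ (ρ₁ - ρ₂) (u₁ - u₂) i =
      (ρ₂ * momentumOp dx dt ν K ρ₁ u₁ ρ₁ u₁ i - ρ₁ * momentumOp dx dt ν K ρ₂ u₂ ρ₂ u₂ i) -
        (ρ₂ * momentumOp dx dt ν K ρ₁ u₁ ρ₂ u₂ i - ρ₁ * momentumOp dx dt ν K ρ₂ u₂ ρ₂ u₂ i) := by
    rw [momentumOp_sub, Pi.sub_apply]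
    ring
  rw [hsplit, mul_momentumOp_sub_mul_momentumOp]
  exact sub_mem (h₁.pressure_imbalance_mem_bigOIdeal h₂ hc hp' hr i (hgrad i))
    (sub_mem hconvection (Submodule.smul_of_tower_mem _ ν hviscosity))

lemma evalAt_dt_relativeEnergy_le (h₁ : IsKortewegSolution ν K c T p' ρ₁ u₁)
    (h₂ : IsKortewegSolution ν K c T p' ρ₂ u₂) (hν : 0 ≤ ν) (hc : 0 ≤ c) {t : ℝ}
    (ht : t ∈ Set.Ioo 0 T) (x : Fin d → ℝ) :
    evalAt (t, x) (dt (relativeEnergy dx K ρ₁ (ρ₁ - ρ₂) (u₁ - u₂))) ≤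
      evalAt (t, x) (div dx (relativeFlux dx ν K ρ₁ (ρ₁ - ρ₂) u₁ u₂ (u₁ - u₂))) +
        evalAt (t, x) (relativeRemainder dx K ρ₁ (ρ₁ - ρ₂) u₂ (u₁ - u₂)
          (momentumOp dx dt ν K ρ₁ u₁ (ρ₁ - ρ₂) (u₁ - u₂))) := by
  have hmass (y : Fin d → ℝ) :
      evalAt (t, y) (massResidual dx dt ρ₁ u₁ - massResidual dx dt ρ₂ u₂) = 0 := by
    rw [map_sub, h₁.mass t ht, h₂.mass t ht, sub_zero]
  have hgrad_mass : evalAt (t, x) (VectorCalculus.grad dx (ρ₁ - ρ₂) ⬝ᵥ VectorCalculus.grad dx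
      (massResidual dx dt ρ₁ u₁ - massResidual dx dt ρ₂ u₂)) = 0 := by
    simp only [dotProduct, map_sum, map_mul, grad_apply, evalAt_dx_eq_zero hmass, mul_zero,
      Finset.sum_const_zero]
  have hdissipation : 0 ≤ evalAt (t, x) (ν • (ρ₁ * ∑ i, ∑ j, strain dx (u₁ - u₂) i j ^ 2)) := by
    simp only [map_smul, map_mul, map_sum, map_pow, smul_eq_mul]
    have := h₁.density_nonneg hc t (Set.Ioo_subset_Icc_self ht) x
    positivity
  rw [deriv_relativeEnergy ν K ρ₁ (ρ₁ - ρ₂) u₁ u₂ (u₁ - u₂) dx_dx dt_dx, ← massResidual_sub]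
  simp only [map_add, map_sub (evalAt (t, x)) (div dx _), map_smul (evalAt (t, x)) (2 * K),
    map_mul, h₁.mass t ht x, hmass, hgrad_mass, smul_zero, mul_zero, add_zero]
  linarith

lemma relativeRemainder_mem_bigOIdeal (h₁ : IsKortewegSolution ν K c T p' ρ₁ u₁)
    (h₂ : IsKortewegSolution ν K c T p' ρ₂ u₂) (hK : 0 < K) (hc : 0 < c)
    (hp' : ContDiffOn ℝ 1 p' (Set.Ioi 0)) :
    relativeRemainder dx K ρ₁ (ρ₁ - ρ₂) u₂ (u₁ - u₂)
        (momentumOp dx dt ν K ρ₁ u₁ (ρ₁ - ρ₂) (u₁ - u₂)) ∈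
      bigOIdeal T fun z => evalAt z (relativeEnergy dx K ρ₁ (ρ₁ - ρ₂) (u₁ - u₂)) := by
  set r := ρ₁ - ρ₂
  set w := u₁ - u₂
  set e := relativeEnergy dx K ρ₁ r w
  have hρ₁ : ∀ t ∈ Set.Ioo 0 T, ∀ x, 0 ≤ evalAt (t, x) ρ₁ := fun t ht =>
    h₁.density_nonneg hc.le t (Set.Ioo_subset_Icc_self ht)
  have hr : r ∈ bigOIdeal T fun z => √(evalAt z e) :=
    mem_bigOIdeal_sqrt_of_mul_sq_le one_pos fun t ht x =>
      (one_mul _).trans_le (sq_le_relativeEnergy r w hK.le (hρ₁ t ht x))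
  have hgrad (i) : dx i r ∈ bigOIdeal T fun z => √(evalAt z e) :=
    mem_bigOIdeal_sqrt_of_mul_sq_le hK fun t ht x =>
      mul_dx_sq_le_relativeEnergy r w hK.le (hρ₁ t ht x) i
  have hw (i) : w i ∈ bigOIdeal T fun z => √(evalAt z e) :=
    mem_bigOIdeal_sqrt_of_mul_sq_le hc fun t ht x =>
      mul_sq_le_relativeEnergy r w hK.le hc.le (h₁.le_density t (Set.Ioo_subset_Icc_self ht) x) i
  exact bigOIdeal_sqrt_sq_le
    (fun t ht x => (sq_nonneg _).trans (sq_le_relativeEnergy r w hK.le (hρ₁ t ht x)))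
    (relativeRemainder_mem_sq K ρ₁ r u₂ w _ hr hgrad hw
      (h₁.momentumOp_sub_mem_bigOIdeal h₂ hc hp' hr hgrad hw))

lemma relativeEnergy_eq_zero (h₁ : IsKortewegSolution ν K c T p' ρ₁ u₁)
    (h₂ : IsKortewegSolution ν K c T p' ρ₂ u₂) (hν : 0 ≤ ν) (hK : 0 < K) (hc : 0 < c)
    (hp' : ContDiffOn ℝ 1 p' (Set.Ioi 0)) (hρ : ∀ x, evalAt (0, x) ρ₁ = evalAt (0, x) ρ₂)
    (hu : ∀ x i, evalAt (0, x) (u₁ i) = evalAt (0, x) (u₂ i)) :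
    ∀ t ∈ Set.Icc 0 T, ∀ x,
      evalAt (t, x) (relativeEnergy dx K ρ₁ (ρ₁ - ρ₂) (u₁ - u₂)) = 0 := by
  set e := relativeEnergy dx K ρ₁ (ρ₁ - ρ₂) (u₁ - u₂) with he
  have he_nonneg : ∀ t ∈ Set.Icc 0 T, ∀ x, 0 ≤ evalAt (t, x) e := fun t ht x =>
    (sq_nonneg _).trans (sq_le_relativeEnergy _ _ hK.le (h₁.density_nonneg hc.le t ht x))
  have he_init (x : Fin d → ℝ) : evalAt (0, x) e = 0 := by
    have hr (y : Fin d → ℝ) : evalAt (0, y) (ρ₁ - ρ₂) = 0 := by rw [map_sub, hρ, sub_self]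
    have hw (i : Fin d) : evalAt (0, x) ((u₁ - u₂) i) = 0 := by
      rw [Pi.sub_apply, map_sub, hu, sub_self]
    simp [he, evalAt_relativeEnergy, hr, hw, evalAt_dx_eq_zero hr, -map_sub, -Pi.sub_apply]
  obtain ⟨C, hC⟩ := isBigO_principal.1 (h₁.relativeRemainder_mem_bigOIdeal h₂ hK hc hp')
  refine eq_zero_of_dt_le_div_add_mul (relativeFlux dx ν K ρ₁ (ρ₁ - ρ₂) u₁ u₂ (u₁ - u₂)) (C := C)
    he_nonneg he_init fun t ht x => (h₁.evalAt_dt_relativeEnergy_le h₂ hν hc.le ht x).trans ?_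
  gcongr
  refine (le_abs_self _).trans ((hC (t, x) ⟨ht, trivial⟩).trans_eq ?_)
  rw [Real.norm_of_nonneg (he_nonneg t (Set.Ioo_subset_Icc_self ht) x)]

theorem unique (h₁ : IsKortewegSolution ν K c T p' ρ₁ u₁)
    (h₂ : IsKortewegSolution ν K c T p' ρ₂ u₂) (hν : 0 ≤ ν) (hK : 0 < K) (hc : 0 < c)
    (hp' : ContDiffOn ℝ 1 p' (Set.Ioi 0)) (hρ : ∀ x, evalAt (0, x) ρ₁ = evalAt (0, x) ρ₂)
    (hu : ∀ x i, evalAt (0, x) (u₁ i) = evalAt (0, x) (u₂ i)) :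
    ∀ t ∈ Set.Icc 0 T, ∀ x,
      evalAt (t, x) ρ₁ = evalAt (t, x) ρ₂ ∧ ∀ i, evalAt (t, x) (u₁ i) = evalAt (t, x) (u₂ i) := by
  intro t ht x
  have henergy := h₁.relativeEnergy_eq_zero h₂ hν hK hc hp' hρ hu t ht x
  constructor
  · have hr := sq_le_relativeEnergy (ρ₁ - ρ₂) (u₁ - u₂) hK.le (h₁.density_nonneg hc.le t ht x)
    rw [henergy, sq_nonpos_iff, map_sub] at hr
    exact sub_eq_zero.1 hr
  · intro i
    have hw := mul_sq_le_relativeEnergy (ρ₁ - ρ₂) (u₁ - u₂) hK.le hc.le (h₁.le_density t ht x) i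
    rw [henergy, mul_nonpos_iff_pos_imp_nonpos] at hw
    have hw_sq := hw.1 hc
    rw [sq_nonpos_iff, Pi.sub_apply, map_sub] at hw_sq
    exact sub_eq_zero.1 hw_sq

end IsKortewegSolution

end Korteweg

section Classical

open SmoothPeriodic VectorCalculus

variable (t : ℝ) (x : V3)

lemma pd_evalAt (f : SmoothPeriodic 3) (i : Fin 3) :
    pd i (fun y => evalAt (t, y) f) x = evalAt (t, x) (dx i f) :=
  f.fderiv_evalAt_single t x i

lemma vdiv_evalAt (F : Fin 3 → SmoothPeriodic 3) :
    vdiv (fun y i => evalAt (t, y) (F i)) x = evalAt (t, x) (div dx F) := by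
  simp only [vdiv, pd_evalAt, div_apply, map_sum]

lemma mdiv_evalAt (M : Fin 3 → Fin 3 → SmoothPeriodic 3) (i : Fin 3) :
    mdiv (fun y i j => evalAt (t, y) (M i j)) x i = evalAt (t, x) (div dx (M i)) := by
  simp only [mdiv, pd_evalAt, div_apply, map_sum]

lemma lap_evalAt (f : SmoothPeriodic 3) :
    _root_.lap (fun y => evalAt (t, y) f) x = evalAt (t, x) (VectorCalculus.lap dx f) := by
  simp only [_root_.lap, pd_evalAt, VectorCalculus.lap, LinearMap.comp_apply, div_apply, grad_apply,
    map_sum]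

lemma symJ_evalAt (u : Fin 3 → SmoothPeriodic 3) (i j : Fin 3) :
    symJ (fun y k => evalAt (t, y) (u k)) x i j = evalAt (t, x) ((2⁻¹ : ℝ) • strain dx u i j) := by
  simp only [symJ, jacb, pd_evalAt, strain, map_smul, map_add, smul_eq_mul]
  ring

lemma grad_comp_evalAt {p : ℝ → ℝ} (f : SmoothPeriodic 3)
    (hp : DifferentiableAt ℝ p (evalAt (t, x) f)) (i : Fin 3) :
    _root_.grad (fun y => p (evalAt (t, y) f)) x i =
      deriv p (evalAt (t, x) f) * evalAt (t, x) (dx i f) := by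
  have hcomp : HasFDerivAt (fun y => p (evalAt (t, y) f)) _ x :=
    hp.hasDerivAt.comp_hasFDerivAt x (f.hasFDerivAt_evalAt t x)
  rw [_root_.grad, pd, hcomp.fderiv]
  rfl

lemma grad_evalAt (f : SmoothPeriodic 3) (i : Fin 3) :
    _root_.grad (fun y => evalAt (t, y) f) x i = evalAt (t, x) (dx i f) :=
  pd_evalAt t x f i

lemma mdiv_convection_evalAt (ρ : SmoothPeriodic 3) (u : Fin 3 → SmoothPeriodic 3) (i : Fin 3) :
    mdiv (fun y i j => evalAt (t, y) ρ * evalAt (t, y) (u i) * evalAt (t, y) (u j)) x i =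
      evalAt (t, x) (div dx ((ρ * u i) • u)) := by
  simp only [← map_mul]
  exact mdiv_evalAt t x (fun i j => ρ * u i * u j) i

lemma mdiv_mul_symJ_evalAt (ρ : SmoothPeriodic 3) (u : Fin 3 → SmoothPeriodic 3) (i : Fin 3) :
    mdiv (fun y i j => evalAt (t, y) ρ * symJ (fun y k => evalAt (t, y) (u k)) y i j) x i =
      2⁻¹ * evalAt (t, x) (div dx (ρ • strain dx u i)) := by
  have hhalf : ((2⁻¹ : ℝ) • ρ • strain dx u i) = fun j => ρ * (2⁻¹ : ℝ) • strain dx u i j := by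
    ext j
    simp
  rw [← smul_eq_mul, ← map_smul, ← map_smul, hhalf]
  simp only [symJ_evalAt, ← map_mul]
  exact mdiv_evalAt t x (fun i j => ρ * (2⁻¹ : ℝ) • strain dx u i j) i

theorem IsKortewegSolution.of_classical {ν κ c T : ℝ} {p : ℝ → ℝ} (hc : 0 < c)
    (hp : DifferentiableOn ℝ p (Set.Ioi 0)) {ρ : SmoothPeriodic 3} {u : Fin 3 → SmoothPeriodic 3}
    (hpos : ∀ t ∈ Set.Icc 0 T, ∀ x, c ≤ evalAt (t, x) ρ)
    (hcont : ∀ t ∈ Set.Ioo 0 T, ∀ x, deriv (fun s => evalAt (s, x) ρ) t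
      + vdiv (fun y => evalAt (t, y) ρ • fun i => evalAt (t, y) (u i)) x = 0)
    (hmom : ∀ t ∈ Set.Ioo 0 T, ∀ x,
      (fun i => deriv (fun s => evalAt (s, x) ρ * evalAt (s, x) (u i)) t)
        + mdiv (fun y i j => evalAt (t, y) ρ * evalAt (t, y) (u i) * evalAt (t, y) (u j)) x
        + _root_.grad (fun y => p (evalAt (t, y) ρ)) x
        - (2 * ν) • mdiv (fun y i j =>
            evalAt (t, y) ρ * symJ (fun y k => evalAt (t, y) (u k)) y i j) x
        - (2 * κ ^ 2) • (evalAt (t, x) ρ •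
            _root_.grad (fun y => _root_.lap (fun y => evalAt (t, y) ρ) y) x) = 0) :
    IsKortewegSolution ν (2 * κ ^ 2) c T (deriv p) ρ u := by
  have hmass : ∀ t ∈ Set.Ioo 0 T, ∀ x, evalAt (t, x) (massResidual dx dt ρ u) = 0 := by
    intro t ht x
    rw [massResidual, map_add, ← vdiv_evalAt, ← (ρ.hasDerivAt_evalAt t x).deriv, ← hcont t ht x]
    rfl
  refine ⟨hpos, hmass, fun t ht x i => ?_⟩
  have hdiff : DifferentiableAt ℝ p (evalAt (t, x) ρ) :=
    hp.differentiableAt (Ioi_mem_nhds (hc.trans_le (hpos t (Set.Ioo_subset_Icc_self ht) x)))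
  have htransport := congrArg (evalAt (t, x)) (transport_mul dx dt ρ (u i) u)
  have hbalance := congrFun (hmom t ht x) i
  simp only [Pi.add_apply, Pi.sub_apply, Pi.smul_apply, Pi.zero_apply, smul_eq_mul, lap_evalAt,
    grad_evalAt, grad_comp_evalAt t x ρ hdiff, mdiv_convection_evalAt, mdiv_mul_symJ_evalAt]
    at hbalance
  simp only [← map_mul, ((ρ * u i).hasDerivAt_evalAt t x).deriv] at hbalance
  simp only [map_add, map_mul, hmass t ht x] at htransport hbalance
  simp only [momentumOp, map_sub, map_mul, map_smul, smul_eq_mul]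
  linarith

end Classical

theorem weak_strong_uniqueness_capillary_general
    {p : ℝ → ℝ} (hp : ContDiffOn ℝ 2 p (Set.Ioi 0)) {ν κ T c : ℝ} (hν : 0 ≤ ν) (hκ : κ ≠ 0)
    (hc : 0 < c) {ρ₁ ρ₂ : ℝ → V3 → ℝ} {u₁ u₂ : ℝ → V3 → V3}
    (hρ₁ : ContDiff ℝ ∞ (fun z : ℝ × V3 => ρ₁ z.1 z.2))
    (hρ₂ : ContDiff ℝ ∞ (fun z : ℝ × V3 => ρ₂ z.1 z.2))
    (hu₁ : ContDiff ℝ ∞ (fun z : ℝ × V3 => u₁ z.1 z.2))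
    (hu₂ : ContDiff ℝ ∞ (fun z : ℝ × V3 => u₂ z.1 z.2))
    (hρ₁per : ∀ t x (k : Fin 3 → ℤ), ρ₁ t (x + fun i => (k i : ℝ)) = ρ₁ t x)
    (hρ₂per : ∀ t x (k : Fin 3 → ℤ), ρ₂ t (x + fun i => (k i : ℝ)) = ρ₂ t x)
    (hu₁per : ∀ t x (k : Fin 3 → ℤ), u₁ t (x + fun i => (k i : ℝ)) = u₁ t x)
    (hu₂per : ∀ t x (k : Fin 3 → ℤ), u₂ t (x + fun i => (k i : ℝ)) = u₂ t x)
    (hpos₁ : ∀ t ∈ Set.Icc (0 : ℝ) T, ∀ x, c ≤ ρ₁ t x)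
    (hpos₂ : ∀ t ∈ Set.Icc (0 : ℝ) T, ∀ x, c ≤ ρ₂ t x)
    (hcont₁ : ∀ t ∈ Set.Ioo (0 : ℝ) T, ∀ x,
      deriv (fun s => ρ₁ s x) t + vdiv (fun y => ρ₁ t y • u₁ t y) x = 0)
    (hcont₂ : ∀ t ∈ Set.Ioo (0 : ℝ) T, ∀ x,
      deriv (fun s => ρ₂ s x) t + vdiv (fun y => ρ₂ t y • u₂ t y) x = 0)
    (hmom₁ : ∀ t ∈ Set.Ioo (0 : ℝ) T, ∀ x,
      (fun i => deriv (fun s => ρ₁ s x * u₁ s x i) t)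
        + mdiv (fun y i j => ρ₁ t y * u₁ t y i * u₁ t y j) x
        + grad (fun y => p (ρ₁ t y)) x
        - (2 * ν) • mdiv (fun y i j => ρ₁ t y * symJ (u₁ t) y i j) x
        - (2 * κ ^ 2) • (ρ₁ t x • grad (fun y => lap (ρ₁ t) y) x)
      = 0)
    (hmom₂ : ∀ t ∈ Set.Ioo (0 : ℝ) T, ∀ x,
      (fun i => deriv (fun s => ρ₂ s x * u₂ s x i) t)
        + mdiv (fun y i j => ρ₂ t y * u₂ t y i * u₂ t y j) x
        + grad (fun y => p (ρ₂ t y)) x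
        - (2 * ν) • mdiv (fun y i j => ρ₂ t y * symJ (u₂ t) y i j) x
        - (2 * κ ^ 2) • (ρ₂ t x • grad (fun y => lap (ρ₂ t) y) x)
      = 0)
    (hid_ρ : ∀ x, ρ₁ 0 x = ρ₂ 0 x)
    (hid_u : ∀ x, u₁ 0 x = u₂ 0 x) :
    ∀ t ∈ Set.Icc (0 : ℝ) T, ∀ x, ρ₁ t x = ρ₂ t x ∧ u₁ t x = u₂ t x := by
  have hdiff : DifferentiableOn ℝ p (Set.Ioi 0) := hp.differentiableOn two_ne_zero
  have hsol₁ := IsKortewegSolution.of_classical (ρ := .ofCurried ρ₁ hρ₁ hρ₁per)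
    (u := fun i => .ofCurried (fun t x => u₁ t x i) (contDiff_pi.1 hu₁ i)
      fun t x k => congrFun (hu₁per t x k) i) hc hdiff hpos₁ hcont₁ hmom₁
  have hsol₂ := IsKortewegSolution.of_classical (ρ := .ofCurried ρ₂ hρ₂ hρ₂per)
    (u := fun i => .ofCurried (fun t x => u₂ t x i) (contDiff_pi.1 hu₂ i)
      fun t x k => congrFun (hu₂per t x k) i) hc hdiff hpos₂ hcont₂ hmom₂
  intro t ht x
  have heq := hsol₁.unique hsol₂ hν (by positivity) hc
    (hp.deriv_of_isOpen isOpen_Ioi (by norm_num)) hid_ρ (fun x => congrFun (hid_u x)) t ht x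
  exact ⟨heq.1, funext heq.2⟩

/-- weak-strong uniqueness, classical form: two smooth periodic
solutions of the Navier–Stokes–Korteweg system with densities bounded below by
`c > 0` and the same initial data coincide on `[0,T] × ℝ³`. -/
theorem weak_strong_uniqueness_capillary
    (ν κ γ T c : ℝ) (hν : 0 < ν) (hκ : 0 < κ) (hγ : 1 < γ) (hT : 0 < T) (hc : 0 < c)
    (ρ₁ ρ₂ : ℝ → V3 → ℝ) (u₁ u₂ : ℝ → V3 → V3)
    (hρ₁ : ContDiff ℝ (⊤ : ℕ∞) (fun p : ℝ × V3 => ρ₁ p.1 p.2))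
    (hρ₂ : ContDiff ℝ (⊤ : ℕ∞) (fun p : ℝ × V3 => ρ₂ p.1 p.2))
    (hu₁ : ContDiff ℝ (⊤ : ℕ∞) (fun p : ℝ × V3 => u₁ p.1 p.2))
    (hu₂ : ContDiff ℝ (⊤ : ℕ∞) (fun p : ℝ × V3 => u₂ p.1 p.2))
    (hρ₁per : ∀ t x (k : Fin 3 → ℤ), ρ₁ t (x + fun i => (k i : ℝ)) = ρ₁ t x)
    (hρ₂per : ∀ t x (k : Fin 3 → ℤ), ρ₂ t (x + fun i => (k i : ℝ)) = ρ₂ t x)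
    (hu₁per : ∀ t x (k : Fin 3 → ℤ), u₁ t (x + fun i => (k i : ℝ)) = u₁ t x)
    (hu₂per : ∀ t x (k : Fin 3 → ℤ), u₂ t (x + fun i => (k i : ℝ)) = u₂ t x)
    (hpos₁ : ∀ t ∈ Set.Icc (0 : ℝ) T, ∀ x, c ≤ ρ₁ t x)
    (hpos₂ : ∀ t ∈ Set.Icc (0 : ℝ) T, ∀ x, c ≤ ρ₂ t x)
    (hcont₁ : ∀ t ∈ Set.Ioo (0 : ℝ) T, ∀ x,
      deriv (fun s => ρ₁ s x) t + vdiv (fun y => ρ₁ t y • u₁ t y) x = 0)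
    (hcont₂ : ∀ t ∈ Set.Ioo (0 : ℝ) T, ∀ x,
      deriv (fun s => ρ₂ s x) t + vdiv (fun y => ρ₂ t y • u₂ t y) x = 0)
    (hmom₁ : ∀ t ∈ Set.Ioo (0 : ℝ) T, ∀ x,
      (fun i => deriv (fun s => ρ₁ s x * u₁ s x i) t)
        + mdiv (fun y i j => ρ₁ t y * u₁ t y i * u₁ t y j) x
        + grad (fun y => ρ₁ t y ^ γ) x
        - (2 * ν) • mdiv (fun y i j => ρ₁ t y * symJ (u₁ t) y i j) x
        - (2 * κ ^ 2) • (ρ₁ t x • grad (fun y => lap (ρ₁ t) y) x)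
      = 0)
    (hmom₂ : ∀ t ∈ Set.Ioo (0 : ℝ) T, ∀ x,
      (fun i => deriv (fun s => ρ₂ s x * u₂ s x i) t)
        + mdiv (fun y i j => ρ₂ t y * u₂ t y i * u₂ t y j) x
        + grad (fun y => ρ₂ t y ^ γ) x
        - (2 * ν) • mdiv (fun y i j => ρ₂ t y * symJ (u₂ t) y i j) x
        - (2 * κ ^ 2) • (ρ₂ t x • grad (fun y => lap (ρ₂ t) y) x)
      = 0)
    (hid_ρ : ∀ x, ρ₁ 0 x = ρ₂ 0 x)
    (hid_u : ∀ x, u₁ 0 x = u₂ 0 x) :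
    ∀ t ∈ Set.Icc (0 : ℝ) T, ∀ x, ρ₁ t x = ρ₂ t x ∧ u₁ t x = u₂ t x := by
  exact weak_strong_uniqueness_capillary_general (p := fun a => a ^ γ)
    (contDiffOn_id.rpow_const_of_ne fun a ha => (Set.mem_Ioi.1 ha).ne')
    hν.le hκ.ne' hc hρ₁ hρ₂ hu₁ hu₂ hρ₁per hρ₂per hu₁per hu₂per hpos₁ hpos₂ hcont₁ hcont₂
    hmom₁ hmom₂ hid_ρ hid_u
end
end

section
/- (Weak-strong uniqueness for pressureless capillary fluids, classical form.) Let ν > 0, κ > 0, T > 0 and c > 0. Suppose (ρ₁, u₁) and (ρ₂, u₂) are two pairs of smooth (C^∞) functions on [0,T] × ℝ³ (with values in ℝ and ℝ³ respectively), ℤ³-periodic in the space variable, with ρᵢ ≥ c everywhere, each satisfying pointwise on (0,T) × ℝ³ the pressureless Navier–Stokes–Korteweg system ∂_t ρ + div(ρ u) = 0 and ∂_t(ρ u) + div(ρ u ⊗ u) − 2ν div(ρ Du) − 2κ² ρ ∇(Δρ) = 0, and with the same initial data: ρ₁(0,·) = ρ₂(0,·) and u₁(0,·) = u₂(0,·).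 Then ρ₁ = ρ₂ and u₁ = u₂ on [0,T] × ℝ³. -/
open scoped BigOperators
open MeasureTheory

noncomputable section

/-!
For two solutions `(r, u)` and `(R, U)` put `w = u - U` and `d = r - R`, and consider the relative
energy `∫ r |w|² + 2 κ² |∇d|² + d²` over a period cell. The two momentum equations, compared along
the flow of the first solution, and the difference of the continuity equations show that its time
derivative is the integral of a divergence, a nonpositive viscous dissipation and a remainder
quadratic in `(w, d, ∇d)`: the third derivatives of `d` coming from the capillary force cancel
against the evolution of `|∇d|²`. As the first density stays away from zero, the energy dominates
these squares; as the second one does, the coefficients of the remainder are bounded. Grönwall's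
inequality then keeps the energy at its initial value zero. The energy identities need nothing but
the Leibniz rule and commuting derivatives.
-/

open Filter

section DifferentialAlgebra

variable {A ι : Type*} [CommRing A] [Algebra ℝ A]
  (δ : Derivation ℝ A A) (D : ι → Derivation ℝ A A)

/-- The symmetric part of the Jacobian, the matrix written `Du` in the momentum equation. -/
def symGrad (u : ι → A) (i j : ι) : A := (1 / 2 : ℝ) • (D j (u i) + D i (u j))

theorem symGrad_sub (u v : ι → A) (i j : ι) :
    symGrad D (u - v) i j = symGrad D u i j - symGrad D v i j := by
  simp only [symGrad, Pi.sub_apply, map_sub, ← smul_sub]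
  congr 1
  ring

theorem symGrad_comm (u : ι → A) (i j : ι) : symGrad D u i j = symGrad D u j i := by
  simp only [symGrad, add_comm]

variable [Fintype ι]

/-- The divergence `∑ i, ∂ᵢ Fᵢ` of a vector field in a differential algebra with spatial
derivations `D i = ∂ᵢ`. -/
def divergence : (ι → A) →ₗ[ℝ] A := ∑ i, (D i : A →ₗ[ℝ] A) ∘ₗ LinearMap.proj i

theorem divergence_apply (F : ι → A) : divergence D F = ∑ i, D i (F i) := by
  simp [divergence]

/-- The Laplacian `Δ f` for the spatial derivations `D`. -/
def laplacian (f : A) : A := ∑ k, D k (D k f)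

theorem laplacian_sub (f g : A) : laplacian D (f - g) = laplacian D f - laplacian D g := by
  simp only [laplacian, map_sub, Finset.sum_sub_distrib]

theorem sum_symGrad_mul_jacobian (u : ι → A) :
    ∑ i, ∑ j, symGrad D u i j * D j (u i) = ∑ i, ∑ j, symGrad D u i j ^ 2 := by
  have hswap : ∑ i, ∑ j, symGrad D u i j * D i (u j) = ∑ i, ∑ j, symGrad D u i j * D j (u i) := by
    rw [Finset.sum_comm]
    simp only [symGrad_comm D u]
  calc ∑ i, ∑ j, symGrad D u i j * D j (u i)
      = (1 / 2 : ℝ) • (∑ i, ∑ j, symGrad D u i j * D j (u i)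
          + ∑ i, ∑ j, symGrad D u i j * D i (u j)) := by rw [hswap]; module
    _ = ∑ i, ∑ j, symGrad D u i j ^ 2 := by
      simp only [← Finset.sum_add_distrib, ← mul_add, Finset.smul_sum, ← mul_smul_comm, sq]
      rfl

/-- The left-hand side `∂ₜ r + div (r u)` of the continuity equation. -/
def massResidual (r : A) (u : ι → A) : A := δ r + divergence D fun j => r * u j

theorem massResidual_sub (r R : A) (u U : ι → A) :
    massResidual δ D r u - massResidual δ D R U =
      massResidual δ D (r - R) U + divergence D fun j => r * (u - U) j := by
  have hflux : (fun j => r * u j) = (fun j => R * U j) + (fun j => (r - R) * U j)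
      + fun j => r * (u - U) j := by
    funext j
    simp only [Pi.add_apply, Pi.sub_apply]
    ring
  simp only [massResidual, hflux, map_add, map_sub]
  ring

/-- The `i`-th component of the left-hand side of the momentum equation. -/
def momentumResidual (ν κ : ℝ) (r : A) (u : ι → A) (i : ι) : A :=
  δ (r * u i) + divergence D (fun j => r * u i * u j)
    - (2 * ν) • divergence D (fun j => r * symGrad D u i j)
    - (2 * κ ^ 2) • (r * D i (laplacian D r))

/-- The momentum operator in convective form, linear in the velocity `w` and the density `d`,
for fields carried by the flow with density `r` and velocity `u`. Its value at `w = u`, `d = r` is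
the momentum equation; its value at the difference of two solutions drives the relative energy. -/
def convectiveMomentum (ν κ : ℝ) (r : A) (u w : ι → A) (d : A) (i : ι) : A :=
  r * (δ (w i) + ∑ j, u j * D j (w i))
    - (2 * ν) • divergence D (fun j => r * symGrad D w i j)
    - (2 * κ ^ 2) • (r * D i (laplacian D d))

theorem convectiveMomentum_sub (ν κ : ℝ) (r : A) (u v w : ι → A) (d e : A) (i : ι) :
    convectiveMomentum δ D ν κ r u (v - w) (d - e) i =
      convectiveMomentum δ D ν κ r u v d i - convectiveMomentum δ D ν κ r u w e i := by
  have hvisc : (fun j => r * symGrad D (v - w) i j) =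
      (fun j => r * symGrad D v i j) - fun j => r * symGrad D w i j := by
    funext j
    simp only [symGrad_sub, mul_sub, Pi.sub_apply]
  simp only [convectiveMomentum, hvisc, laplacian_sub, Pi.sub_apply, map_sub, mul_sub,
    Finset.sum_sub_distrib, smul_sub]
  ring

theorem momentumResidual_eq_convectiveMomentum_add (ν κ : ℝ) (r : A) (u : ι → A) (i : ι) :
    momentumResidual δ D ν κ r u i =
      convectiveMomentum δ D ν κ r u u r i + u i * massResidual δ D r u := by
  have htransport : ∀ j, D j (r * u i * u j) = r * (u j * D j (u i)) + u i * D j (r * u j) := by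
    intro j
    simp only [Derivation.leibniz, smul_eq_mul]
    ring
  simp only [momentumResidual, convectiveMomentum, massResidual, divergence_apply, htransport,
    Finset.sum_add_distrib, ← Finset.mul_sum, Derivation.leibniz δ, smul_eq_mul]
  ring

/-- Multiplying by the second density `R` compares the background flow `(R, U)`, carried by
`(r, u)`, with its own momentum equation without dividing by a density. -/
theorem mul_convectiveMomentum_background (ν κ : ℝ) (r R : A) (u U : ι → A) (i : ι) :
    R * convectiveMomentum δ D ν κ r u U R i =
      r * convectiveMomentum δ D ν κ R U U R i + r * R * ∑ j, D j (U i) * (u - U) j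
        - (2 * ν) • ∑ j, symGrad D U i j * (R * D j (r - R) - (r - R) * D j R) := by
  have hvisc : R * (divergence D fun j => r * symGrad D U i j) =
      r * (divergence D fun j => R * symGrad D U i j)
        + ∑ j, symGrad D U i j * (R * D j (r - R) - (r - R) * D j R) := by
    simp only [divergence_apply, Finset.mul_sum, ← Finset.sum_add_distrib]
    refine Finset.sum_congr rfl fun j _ => ?_
    simp only [Derivation.leibniz, smul_eq_mul, map_sub]
    ring
  have hadvect : ∑ j, D j (U i) * (u - U) j = ∑ j, u j * D j (U i) - ∑ j, U j * D j (U i) := by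
    simp only [mul_comm (D _ (U i)), Pi.sub_apply, sub_mul, Finset.sum_sub_distrib]
  simp only [convectiveMomentum, hadvect, Algebra.smul_def]
  linear_combination -(algebraMap ℝ A (2 * ν)) * hvisc

theorem derivation_mul_sq (r f : A) (u : ι → A) :
    δ (r * f ^ 2) = f ^ 2 * massResidual δ D r u + 2 * (f * (r * (δ f + ∑ j, u j * D j f)))
      - divergence D fun j => r * f ^ 2 * u j := by
  have hflux : ∀ j, D j (r * f ^ 2 * u j) =
      f ^ 2 * D j (r * u j) + 2 * (f * (r * (u j * D j f))) := by
    intro j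
    simp only [sq, Derivation.leibniz, smul_eq_mul]
    ring
  simp only [massResidual, divergence_apply, hflux, Finset.sum_add_distrib, ← Finset.mul_sum]
  simp only [sq, Derivation.leibniz, smul_eq_mul]
  ring

theorem divergence_mul (F : ι → A) (f : A) :
    (divergence D fun i => F i * f) = divergence D F * f + ∑ i, F i * D i f := by
  simp only [divergence_apply, Derivation.leibniz, smul_eq_mul, Finset.sum_add_distrib,
    Finset.sum_mul]
  rw [add_comm]
  simp only [mul_comm]

theorem sum_mul_divergence (w : ι → A) (M : ι → ι → A) :
    ∑ i, w i * divergence D (M i) =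
      (divergence D fun j => ∑ i, M i j * w i) - ∑ i, ∑ j, M i j * D j (w i) := by
  have hrow : ∀ i, w i * divergence D (M i) =
      (divergence D fun j => M i j * w i) - ∑ j, M i j * D j (w i) := by
    intro i
    rw [divergence_mul]
    ring
  have hsum : (fun j => ∑ i, M i j * w i) = ∑ i, fun j => M i j * w i := by
    funext j
    rw [Finset.sum_apply]
  rw [Finset.sum_congr rfl fun i _ => hrow i, Finset.sum_sub_distrib, hsum, map_sum]

/-- Twice the relative energy of the velocity difference `w` and the density difference `d`. -/
def relEnergy (κ : ℝ) (r : A) (w : ι → A) (d : A) : A :=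
  r * ∑ i, w i ^ 2 + (2 * κ ^ 2) • ∑ i, D i d ^ 2 + d ^ 2

/-- The part of the evolution of `|∇d|²` quadratic in `(d, ∇d)` that is left when `d` is
transported by the velocity `U`. -/
def gradRemainder (d : A) (U : ι → A) : A :=
  (∑ i, D i d ^ 2) * divergence D U + 2 * ∑ i, ∑ j, D i d * D j d * D i (U j)
    + 2 * (d * ∑ i, D i d * D i (divergence D U))

theorem sum_mul_materialDeriv (ν κ : ℝ) (r : A) (u w : ι → A) (d : A) :
    ∑ i, w i * (r * (δ (w i) + ∑ j, u j * D j (w i))) =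
      ∑ i, w i * convectiveMomentum δ D ν κ r u w d i
        + (2 * ν) • ((divergence D fun j => ∑ i, r * symGrad D w i j * w i)
            - r * ∑ i, ∑ j, symGrad D w i j ^ 2)
        + (2 * κ ^ 2) • ((divergence D fun i => r * w i * laplacian D d)
            - (divergence D fun i => r * w i) * laplacian D d) := by
  have hvisc := sum_mul_divergence D w fun i j => r * symGrad D w i j
  simp only [mul_assoc r, ← Finset.mul_sum, sum_symGrad_mul_jacobian] at hvisc
  have hcap := divergence_mul D (fun i => r * w i) (laplacian D d)
  rw [hcap, add_sub_cancel_left]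
  simp only [mul_assoc r, ← Finset.mul_sum]
  rw [← hvisc]
  simp only [convectiveMomentum, mul_sub, Finset.sum_sub_distrib, Finset.smul_sum, mul_smul_comm,
    Finset.mul_sum]
  simp only [mul_left_comm r]
  ring

theorem derivation_sq (f : A) : δ (f ^ 2) = 2 * (f * δ f) := by
  simp only [sq, Derivation.leibniz, smul_eq_mul]
  ring

theorem divergence_mul_left (d : A) (U : ι → A) :
    (divergence D fun j => d * U j) = divergence D U * d + ∑ j, U j * D j d := by
  simp only [mul_comm d, divergence_mul]

theorem derivation_sq_density (r d : A) (w U : ι → A) :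
    δ (d ^ 2) =
      2 * (d * (massResidual δ D d U + divergence D fun j => r * w j))
        + 2 * (r * ∑ j, w j * D j d) - d ^ 2 * divergence D U
        - 2 * (divergence D fun j => r * w j * d) - divergence D fun j => U j * d ^ 2 := by
  have hsq : ∑ j, U j * D j (d ^ 2) = 2 * (d * ∑ j, U j * D j d) := by
    simp only [derivation_sq, Finset.mul_sum, mul_left_comm (U _)]
  rw [divergence_mul, divergence_mul, massResidual, divergence_mul_left, hsq, derivation_sq]
  simp only [mul_assoc r, ← Finset.mul_sum]
  ring

section Commuting

variable (hδ : ∀ i f, δ (D i f) = D i (δ f)) (hD : ∀ i j f, D i (D j f) = D j (D i f))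
include hD

theorem two_mul_sum_grad_mul_grad_divergence (d : A) (U : ι → A) :
    2 * ∑ i, D i d * D i (divergence D fun j => d * U j) =
      (divergence D fun j => U j * ∑ i, D i d ^ 2) + gradRemainder D d U := by
  have hgrad : ∀ i, D i d * D i (divergence D fun j => d * U j) =
      d * (D i d * D i (divergence D U)) + D i d ^ 2 * divergence D U
        + (∑ j, D i d * D j d * D i (U j) + D i d * ∑ j, U j * D j (D i d)) := by
    intro i
    simp only [divergence_mul_left, map_add, map_sum, Derivation.leibniz, smul_eq_mul, hD i,
      Finset.sum_add_distrib, mul_assoc (D i d), ← Finset.mul_sum]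
    ring
  have htransport : ∑ j, U j * D j (∑ i, D i d ^ 2) =
      2 * ∑ i, D i d * ∑ j, U j * D j (D i d) := by
    simp only [map_sum, Finset.mul_sum]
    rw [Finset.sum_comm]
    refine Finset.sum_congr rfl fun i _ => Finset.sum_congr rfl fun j _ => ?_
    rw [derivation_sq]
    ring
  simp only [hgrad, divergence_mul, htransport, gradRemainder, Finset.sum_add_distrib,
    ← Finset.mul_sum, ← Finset.sum_mul]
  ring

include hδ

theorem derivation_sum_sq_grad (d : A) (U : ι → A) :
    δ (∑ i, D i d ^ 2) =
      2 * (divergence D fun i => D i d * massResidual δ D d U)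
        - (divergence D fun i => U i * ∑ k, D k d ^ 2)
        - 2 * (laplacian D d * massResidual δ D d U) - gradRemainder D d U := by
  have hderiv : δ (∑ i, D i d ^ 2) = 2 * ∑ i, D i d * D i (massResidual δ D d U)
      - 2 * ∑ i, D i d * D i (divergence D fun j => d * U j) := by
    simp only [massResidual, map_add, mul_add, Finset.sum_add_distrib, add_sub_cancel_right,
      map_sum, Finset.mul_sum, derivation_sq, hδ]
  have hlap : laplacian D d = divergence D fun i => D i d := (divergence_apply D _).symm
  rw [hderiv, two_mul_sum_grad_mul_grad_divergence D hD, divergence_mul D (fun i => D i d), hlap]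
  ring

/-- The factor multiplying `2 d - 4 κ² Δd` is the difference of the two continuity equations, by
`massResidual_sub`; it absorbs the capillary work `-4 κ² Δd div (r w)`. -/
theorem exists_relEnergy_balance (ν κ : ℝ) (r : A) (u w U : ι → A) (d : A) :
    ∃ F : ι → A, δ (relEnergy D κ r w d) = divergence D F
      + (∑ i, w i ^ 2) * massResidual δ D r u
      + (2 * d - (4 * κ ^ 2) • laplacian D d) *
          (massResidual δ D d U + divergence D fun j => r * w j)
      + 2 * ∑ i, w i * convectiveMomentum δ D ν κ r u w d i
      - (4 * ν) • (r * ∑ i, ∑ j, symGrad D w i j ^ 2)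
      - (2 * κ ^ 2) • gradRemainder D d U
      + 2 * (r * ∑ j, w j * D j d) - d ^ 2 * divergence D U := by
  have hkin : δ (r * ∑ i, w i ^ 2) = (∑ i, w i ^ 2) * massResidual δ D r u
      + 2 * ∑ i, w i * (r * (δ (w i) + ∑ j, u j * D j (w i)))
      - divergence D (∑ i, fun j => r * w i ^ 2 * u j) := by
    simp only [Finset.mul_sum _ _ r, map_sum, derivation_mul_sq δ D r _ u, Finset.sum_sub_distrib,
      Finset.sum_add_distrib, Finset.sum_mul, Finset.mul_sum _ _ (2 : A)]
  rw [sum_mul_materialDeriv δ D ν κ r u w d] at hkin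
  refine ⟨-(∑ i, fun j => r * w i ^ 2 * u j)
    + (4 * ν) • (fun j => ∑ i, r * symGrad D w i j * w i)
    + (4 * κ ^ 2) • (fun i => r * w i * laplacian D d)
    + (4 * κ ^ 2) • (fun i => D i d * massResidual δ D d U)
    - (2 * κ ^ 2) • (fun i => U i * ∑ k, D k d ^ 2)
    - (2 : ℝ) • (fun j => r * w j * d) - (fun j => U j * d ^ 2), ?_⟩
  rw [relEnergy, map_add, map_add, δ.map_smul, hkin, derivation_sum_sq_grad δ D hδ hD d U,
    derivation_sq_density δ D r d w U]
  simp only [map_add, map_sub, map_neg, map_smul, smul_sub]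
  simp only [Algebra.smul_def, map_mul, map_ofNat]
  ring

end Commuting
end DifferentialAlgebra

theorem nonpos_of_hasDerivAt_le_mul_s13 {I I' : ℝ → ℝ} {T K : ℝ}
    (hcont : ContinuousOn I (Set.Icc 0 T)) (hderiv : ∀ t ∈ Set.Ioo 0 T, HasDerivAt I (I' t) t)
    (hle : ∀ t ∈ Set.Ioo 0 T, I' t ≤ K * I t) (hzero : I 0 ≤ 0) {t : ℝ} (ht : t ∈ Set.Icc 0 T) :
    I t ≤ 0 := by
  have hfactor : ∀ s ∈ Set.Ioo 0 T, HasDerivAt (fun s => I s * Real.exp (-K * s))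
      ((I' s - K * I s) * Real.exp (-K * s)) s := by
    intro s hs
    refine ((hderiv s hs).mul ((hasDerivAt_id s).const_mul (-K)).exp).congr_deriv ?_
    simp only [id]
    ring
  have hanti : AntitoneOn (fun s => I s * Real.exp (-K * s)) (Set.Icc 0 T) := by
    apply antitoneOn_of_deriv_nonpos (convex_Icc 0 T) (by fun_prop) <;> rw [interior_Icc]
    · exact fun s hs => (hfactor s hs).differentiableAt.differentiableWithinAt
    · intro s hs
      rw [(hfactor s hs).deriv]
      exact mul_nonpos_of_nonpos_of_nonneg (sub_nonpos.2 (hle s hs)) (Real.exp_pos _).le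
  have h : I t * Real.exp (-K * t) ≤ I 0 * Real.exp (-K * 0) :=
    hanti ⟨le_rfl, ht.1.trans ht.2⟩ ht ht.1
  rw [mul_zero, Real.exp_zero, mul_one] at h
  exact nonpos_of_mul_nonpos_left (h.trans hzero) (Real.exp_pos _)

theorem insertNth_one_eq_add_single {n : ℕ} (i : Fin (n + 1)) (y : Fin n → ℝ) :
    (i.insertNth 1 y : Fin (n + 1) → ℝ) =
      i.insertNth 0 y + fun j => ((Pi.single i 1 : Fin (n + 1) → ℤ) j : ℝ) := by
  funext j
  refine Fin.succAboveCases i ?_ (fun k => ?_) j <;> simp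

section PeriodicFields

variable {n : ℕ}

/-- The algebra of smooth functions of `(t, x)`, `ℤⁿ`-periodic in `x`. -/
def periodicSmooth (n : ℕ) : Subalgebra ℝ (ℝ × (Fin n → ℝ) → ℝ) where
  carrier := {f | ContDiff ℝ (⊤ : ℕ∞) f ∧
    ∀ t x (k : Fin n → ℤ), f (t, x + fun i => (k i : ℝ)) = f (t, x)}
  mul_mem' := fun ⟨hf, hf'⟩ ⟨hg, hg'⟩ =>
    ⟨hf.mul hg, fun t x k => by simp only [Pi.mul_apply, hf', hg']⟩
  add_mem' := fun ⟨hf, hf'⟩ ⟨hg, hg'⟩ =>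
    ⟨hf.add hg, fun t x k => by simp only [Pi.add_apply, hf', hg']⟩
  algebraMap_mem' := fun _ => ⟨contDiff_const, fun _ _ _ => rfl⟩

instance : CoeFun (periodicSmooth n) fun _ => ℝ × (Fin n → ℝ) → ℝ := ⟨Subtype.val⟩

namespace periodicSmooth

variable (f : periodicSmooth n)

theorem contDiff : ContDiff ℝ (⊤ : ℕ∞) f := f.2.1

theorem differentiable : Differentiable ℝ f := (contDiff f).differentiable (by simp)

theorem contDiff_fderiv : ContDiff ℝ (⊤ : ℕ∞) (fderiv ℝ f) :=
  (contDiff f).fderiv_right (by simp)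

theorem continuous : Continuous f := (contDiff f).continuous

theorem continuous_slice (t : ℝ) : Continuous fun x => f (t, x) :=
  (continuous f).comp (Continuous.prodMk_right t)

theorem periodic (t : ℝ) (x : Fin n → ℝ) (k : Fin n → ℤ) :
    f (t, x + fun i => (k i : ℝ)) = f (t, x) := f.2.2 t x k

theorem coe_sum_apply {ι : Type*} (s : Finset ι) (g : ι → periodicSmooth n)
    (p : ℝ × (Fin n → ℝ)) : (∑ i ∈ s, g i : periodicSmooth n) p = ∑ i ∈ s, g i p := by
  simp only [AddSubmonoidClass.coe_finsetSum, Finset.sum_apply]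

theorem fderiv_periodic (t : ℝ) (x : Fin n → ℝ) (k : Fin n → ℤ) :
    fderiv ℝ f (t, x + fun i => (k i : ℝ)) = fderiv ℝ f (t, x) := by
  have hshift : (fun p : ℝ × (Fin n → ℝ) => f (p + (0, fun i => (k i : ℝ)))) = f := by
    funext ⟨s, y⟩
    simpa only [Prod.mk_add_mk, add_zero] using periodic f s y k
  have h := fderiv_comp_add_right (𝕜 := ℝ) (f := f) (x := (t, x)) (0, fun i => (k i : ℝ))
  rw [hshift, Prod.mk_add_mk, add_zero] at h
  exact h.symm

/-- The derivation `f ↦ ∂f/∂v` of the algebra of smooth periodic functions along a fixed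
space-time direction `v`. -/
def dirDeriv (v : ℝ × (Fin n → ℝ)) : Derivation ℝ (periodicSmooth n) (periodicSmooth n) :=
  Derivation.mk'
    { toFun := fun f => ⟨fun p => fderiv ℝ f p v, (contDiff_fderiv f).clm_apply contDiff_const,
        fun t x k => congrArg (· v) (fderiv_periodic f t x k)⟩
      map_add' := fun f g => Subtype.ext <| funext fun p =>
        congrArg (· v) (fderiv_add (differentiable f p) (differentiable g p))
      map_smul' := fun c f => Subtype.ext <| funext fun p =>
        congrArg (· v) (fderiv_const_smul (differentiable f p) c) }
    fun f g => Subtype.ext <| funext fun p =>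
      congrArg (· v) (fderiv_mul (differentiable f p) (differentiable g p))

theorem dirDeriv_comm (v w : ℝ × (Fin n → ℝ)) (f : periodicSmooth n) :
    dirDeriv v (dirDeriv w f) = dirDeriv w (dirDeriv v f) := by
  have hsecond : ∀ a b p, dirDeriv a (dirDeriv b f) p = fderiv ℝ (fderiv ℝ f) p a b := by
    intro a b p
    have hdiff : DifferentiableAt ℝ (fderiv ℝ f) p :=
      (contDiff_fderiv f).differentiable (by simp) p
    calc dirDeriv a (dirDeriv b f) p = fderiv ℝ (fun q => fderiv ℝ f q b) p a := rfl
      _ = fderiv ℝ (fderiv ℝ f) p a b := by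
        simp [fderiv_clm_apply hdiff (differentiableAt_const _)]
  have hsymm : ∀ p, IsSymmSndFDerivAt ℝ f p := fun p =>
    (contDiff f).contDiffAt.isSymmSndFDerivAt
      (by rw [minSmoothness_of_isRCLikeNormedField]; exact WithTop.coe_le_coe.2 le_top)
  refine Subtype.ext (funext fun p => ?_)
  rw [hsecond, hsecond, (hsymm p).eq]

/-- The time derivative `∂ₜ`. -/
def timeDeriv (n : ℕ) : Derivation ℝ (periodicSmooth n) (periodicSmooth n) := dirDeriv (1, 0)

/-- The spatial partial derivative `∂ᵢ`. -/
def spaceDeriv (n : ℕ) (i : Fin n) : Derivation ℝ (periodicSmooth n) (periodicSmooth n) :=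
  dirDeriv (0, Pi.single i 1)

theorem timeDeriv_spaceDeriv (i : Fin n) (f : periodicSmooth n) :
    timeDeriv n (spaceDeriv n i f) = spaceDeriv n i (timeDeriv n f) := dirDeriv_comm _ _ f

theorem spaceDeriv_comm (i j : Fin n) (f : periodicSmooth n) :
    spaceDeriv n i (spaceDeriv n j f) = spaceDeriv n j (spaceDeriv n i f) := dirDeriv_comm _ _ f

theorem hasDerivAt_timeDeriv (t : ℝ) (x : Fin n → ℝ) :
    HasDerivAt (fun s => f (s, x)) (timeDeriv n f (t, x)) t :=
  (differentiable f (t, x)).hasFDerivAt.comp_hasDerivAt t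
    ((hasDerivAt_id t).prodMk (hasDerivAt_const t x))

theorem hasFDerivAt_slice (t : ℝ) (x : Fin n → ℝ) :
    HasFDerivAt (fun y => f (t, y))
      ((fderiv ℝ f (t, x)).comp (ContinuousLinearMap.inr ℝ ℝ (Fin n → ℝ))) x :=
  (differentiable f (t, x)).hasFDerivAt.comp x (hasFDerivAt_prodMk_right t x)

theorem fderiv_slice_single (t : ℝ) (x : Fin n → ℝ) (i : Fin n) :
    fderiv ℝ (fun y => f (t, y)) x (Pi.single i 1) = spaceDeriv n i f (t, x) := by
  rw [(hasFDerivAt_slice f t x).fderiv]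
  rfl

theorem exists_mem_cell_forall_eq (x : Fin n → ℝ) :
    ∃ y ∈ Set.Icc (0 : Fin n → ℝ) 1, ∀ (f : periodicSmooth n) t, f (t, x) = f (t, y) := by
  refine ⟨fun i => Int.fract (x i),
    ⟨fun i => Int.fract_nonneg _, fun i => (Int.fract_lt_one _).le⟩, fun f t => ?_⟩
  rw [← periodic f t (fun i => Int.fract (x i)) fun i => ⌊x i⌋]
  exact congrArg (fun y => f (t, y)) (funext fun i => (Int.fract_add_floor (x i)).symm)

theorem isBigO_one (a b : ℝ) :
    f =O[𝓟 (Set.Icc a b ×ˢ Set.univ)] fun _ => (1 : ℝ) := by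
  obtain ⟨M, hM⟩ := (isCompact_Icc.prod isCompact_Icc).exists_bound_of_continuousOn
    (s := Set.Icc a b ×ˢ Set.Icc (0 : Fin n → ℝ) 1) (continuous f).continuousOn
  refine Asymptotics.isBigO_principal.2 ⟨M, fun ⟨t, x⟩ ⟨ht, _⟩ => ?_⟩
  obtain ⟨y, hy, hxy⟩ := exists_mem_cell_forall_eq x
  simpa [hxy] using hM (t, y) ⟨ht, hy⟩

theorem integrableOn_slice (t : ℝ) :
    IntegrableOn (fun x => f (t, x)) (Set.Icc (0 : Fin n → ℝ) 1) :=
  (continuous_slice f t).continuousOn.integrableOn_compact isCompact_Icc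

theorem integral_divergence_eq_zero (F : Fin n → periodicSmooth n) (t : ℝ) :
    ∫ x in Set.Icc (0 : Fin n → ℝ) 1, divergence (spaceDeriv n) F (t, x) = 0 := by
  rcases n with _ | n
  · simp [divergence_apply]
  have hdiv : ∀ x, divergence (spaceDeriv (n + 1)) F (t, x) = ∑ i, ((fderiv ℝ (F i) (t, x)).comp
      (ContinuousLinearMap.inr ℝ ℝ (Fin (n + 1) → ℝ))) (Pi.single i 1) := by
    intro x
    rw [divergence_apply, coe_sum_apply]
    rfl
  have hfaces : ∀ i (y : Fin n → ℝ),
      F i (t, i.insertNth 1 y) = F i (t, i.insertNth 0 y) := by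
    intro i y
    rw [insertNth_one_eq_add_single, periodic]
  have hint := integrableOn_slice (divergence (spaceDeriv (n + 1)) F) t
  simp only [hdiv] at hint ⊢
  rw [integral_divergence_of_hasFDerivAt_off_countable' 0 1 zero_le_one
    (fun i x => F i (t, x)) _ ∅ Set.countable_empty
    (fun i => (continuous_slice (F i) t).continuousOn)
    (fun x _ i => hasFDerivAt_slice (F i) t x) hint]
  simp only [Pi.zero_apply, Pi.one_apply, hfaces, sub_self, Finset.sum_const_zero]

theorem hasDerivAt_integral_slice (t : ℝ) :
    HasDerivAt (fun s => ∫ x in Set.Icc (0 : Fin n → ℝ) 1, f (s, x))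
      (∫ x in Set.Icc (0 : Fin n → ℝ) 1, timeDeriv n f (t, x)) t := by
  obtain ⟨M, hM⟩ := Asymptotics.isBigO_principal.1 (isBigO_one (timeDeriv n f) (t - 1) (t + 1))
  have hbound : ∀ x, ∀ s ∈ Set.Icc (t - 1) (t + 1), ‖timeDeriv n f (s, x)‖ ≤ M :=
    fun x s hs => by simpa using hM (s, x) ⟨hs, Set.mem_univ x⟩
  exact (hasDerivAt_integral_of_dominated_loc_of_deriv_le
    (F := fun s x => f (s, x)) (F' := fun s x => timeDeriv n f (s, x)) (bound := fun _ => M)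
    (Icc_mem_nhds (by linarith) (by linarith))
    (.of_forall fun s => (integrableOn_slice f s).aestronglyMeasurable)
    (integrableOn_slice f t) (integrableOn_slice (timeDeriv n f) t).aestronglyMeasurable
    (.of_forall hbound) (integrableOn_const isCompact_Icc.measure_lt_top.ne)
    (.of_forall fun x s _ => hasDerivAt_timeDeriv f s x)).2

theorem eq_zero_of_integral_cell_eq_zero (t : ℝ)
    (hnonneg : ∀ x, 0 ≤ f (t, x)) (hint : ∫ x in Set.Icc (0 : Fin n → ℝ) 1, f (t, x) = 0)
    (x : Fin n → ℝ) : f (t, x) = 0 := by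
  have hae := (setIntegral_eq_zero_iff_of_nonneg_ae (.of_forall hnonneg)
    (integrableOn_slice f t)).1 hint
  have hcell : Set.EqOn (fun x => f (t, x)) 0 (Set.Icc 0 1) :=
    Measure.eqOn_of_ae_eq hae (continuous_slice f t).continuousOn continuousOn_const (by
      rw [← Set.pi_univ_Icc, interior_pi_set Set.finite_univ, closure_pi_set]
      simp [closure_Ioo])
  obtain ⟨y, hy, hxy⟩ := exists_mem_cell_forall_eq x
  rw [hxy]
  exact hcell hy

theorem eq_zero_of_timeDeriv_le_divergence_add {e : periodicSmooth n} {T K : ℝ}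
    (hnonneg : ∀ t ∈ Set.Icc 0 T, ∀ x, 0 ≤ e (t, x)) (hzero : ∀ x, e (0, x) = 0)
    {F : Fin n → periodicSmooth n}
    (hle : ∀ t ∈ Set.Ioo 0 T, ∀ x,
      timeDeriv n e (t, x) ≤ divergence (spaceDeriv n) F (t, x) + K * e (t, x)) :
    ∀ t ∈ Set.Icc 0 T, ∀ x, e (t, x) = 0 := by
  intro t ht
  refine eq_zero_of_integral_cell_eq_zero e t (hnonneg t ht) (le_antisymm ?_
    (integral_nonneg (hnonneg t ht)))
  refine nonpos_of_hasDerivAt_le_mul_s13 (K := K)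
    (fun s _ => (hasDerivAt_integral_slice e s).continuousAt.continuousWithinAt)
    (fun s _ => hasDerivAt_integral_slice e s) (fun s hs => ?_) ?_ ht
  · have hdiv := integrableOn_slice (divergence (spaceDeriv n) F) s
    have he := (integrableOn_slice e s).const_mul K
    have hmono := integral_mono (integrableOn_slice (timeDeriv n e) s) (hdiv.add he) (hle s hs)
    simpa only [Pi.add_apply, integral_add hdiv he, integral_divergence_eq_zero, integral_const_mul,
      zero_add] using hmono
  · simp only [hzero, integral_zero, le_refl]

end periodicSmooth
end PeriodicFields

section RelativeEnergy

open periodicSmooth Asymptotics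

variable {n : ℕ}

/-- Evaluation of smooth periodic functions at a space-time point. -/
def evalAt (p : ℝ × (Fin n → ℝ)) : periodicSmooth n →ₐ[ℝ] ℝ :=
  (Pi.evalAlgHom ℝ (fun _ => ℝ) p).comp (periodicSmooth n).val

theorem evalAt_apply (p : ℝ × (Fin n → ℝ)) (f : periodicSmooth n) : evalAt p f = f p := rfl

/-- The density `r` and the velocity `u` satisfy the pressureless Navier–Stokes–Korteweg system
with viscosity `ν` and capillarity `κ` at the space-time point `p`. -/
structure IsSolutionAt (ν κ : ℝ) (r : periodicSmooth n) (u : Fin n → periodicSmooth n)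
    (p : ℝ × (Fin n → ℝ)) : Prop where
  mass : massResidual (timeDeriv n) (spaceDeriv n) r u p = 0
  momentum : ∀ i, momentumResidual (timeDeriv n) (spaceDeriv n) ν κ r u i p = 0

/-- The value of the convective momentum operator, carried by `(r, u)`, at the difference of the
two fields when both `(r, u)` and `(R, U)` solve the system and `R` does not vanish. -/
def relForce (ν : ℝ) (r R : periodicSmooth n) (u U : Fin n → periodicSmooth n) (i : Fin n)
    (p : ℝ × (Fin n → ℝ)) : ℝ :=
  2 * ν * ∑ j, symGrad (spaceDeriv n) U i j p *
      (spaceDeriv n j (r - R) p - spaceDeriv n j R p * ((R p)⁻¹ * (r - R) p))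
    - r p * ∑ j, spaceDeriv n j (U i) p * (u - U) j p

theorem IsSolutionAt.convectiveMomentum_eq_zero {ν κ : ℝ} {r : periodicSmooth n}
    {u : Fin n → periodicSmooth n} {p : ℝ × (Fin n → ℝ)} (h : IsSolutionAt ν κ r u p) (i : Fin n) :
    convectiveMomentum (timeDeriv n) (spaceDeriv n) ν κ r u u r i p = 0 := by
  have hsplit := congrArg (evalAt p) (momentumResidual_eq_convectiveMomentum_add
    (timeDeriv n) (spaceDeriv n) ν κ r u i)
  simpa only [map_add, map_mul, evalAt_apply, h.mass, h.momentum i, mul_zero, add_zero,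
    eq_comm] using hsplit

theorem convectiveMomentum_sub_apply {ν κ : ℝ} {r R : periodicSmooth n}
    {u U : Fin n → periodicSmooth n} {p : ℝ × (Fin n → ℝ)} (h₁ : IsSolutionAt ν κ r u p)
    (h₂ : IsSolutionAt ν κ R U p) (hR : R p ≠ 0) (i : Fin n) :
    convectiveMomentum (timeDeriv n) (spaceDeriv n) ν κ r u (u - U) (r - R) i p =
      relForce ν r R u U i p := by
  have hsub := congrArg (evalAt p)
    (convectiveMomentum_sub (timeDeriv n) (spaceDeriv n) ν κ r u u U r R i)
  have hback := congrArg (evalAt p)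
    (mul_convectiveMomentum_background (timeDeriv n) (spaceDeriv n) ν κ r R u U i)
  simp only [map_add, map_sub, map_mul, map_sum, map_smul, smul_eq_mul, evalAt_apply,
    h₁.convectiveMomentum_eq_zero, h₂.convectiveMomentum_eq_zero, mul_zero, zero_add, zero_sub]
    at hsub hback
  rw [hsub, relForce]
  refine mul_left_cancel₀ hR ?_
  have hvisc : R p * ∑ j, symGrad (spaceDeriv n) U i j p *
      (spaceDeriv n j (r - R) p - spaceDeriv n j R p * ((R p)⁻¹ * (r - R) p)) =
      ∑ j, symGrad (spaceDeriv n) U i j p *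
        (R p * (spaceDeriv n j r p - spaceDeriv n j R p) - (r p - R p) * spaceDeriv n j R p) := by
    rw [Finset.mul_sum]
    refine Finset.sum_congr rfl fun j _ => ?_
    simp only [map_sub, AddSubgroupClass.coe_sub, Pi.sub_apply]
    field_simp
  linear_combination -hback - 2 * ν * hvisc

/-- The part of the time derivative of the relative energy of two solutions that is quadratic in
`u - U`, `r - R` and `∇(r - R)`. -/
def relRemainder (ν κ : ℝ) (r R : periodicSmooth n) (u U : Fin n → periodicSmooth n)
    (p : ℝ × (Fin n → ℝ)) : ℝ :=
  2 * ∑ i, (u - U) i p * relForce ν r R u U i p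
    - 2 * κ ^ 2 * gradRemainder (spaceDeriv n) (r - R) U p
    + 2 * (r p * ∑ j, (u - U) j p * spaceDeriv n j (r - R) p)
    - divergence (spaceDeriv n) U p * (r - R) p ^ 2

theorem exists_timeDeriv_relEnergy_le {ν : ℝ} (hν : 0 ≤ ν) (κ : ℝ) (r R : periodicSmooth n)
    (u U : Fin n → periodicSmooth n) :
    ∃ F : Fin n → periodicSmooth n, ∀ p, IsSolutionAt ν κ r u p → IsSolutionAt ν κ R U p →
      0 < r p → R p ≠ 0 →
      timeDeriv n (relEnergy (spaceDeriv n) κ r (u - U) (r - R)) p ≤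
        divergence (spaceDeriv n) F p + relRemainder ν κ r R u U p := by
  obtain ⟨F, hF⟩ := exists_relEnergy_balance (timeDeriv n) (spaceDeriv n) timeDeriv_spaceDeriv
    spaceDeriv_comm ν κ r u (u - U) U (r - R)
  refine ⟨F, fun p h₁ h₂ hr hR => ?_⟩
  have hbalance := congrArg (evalAt p) hF
  rw [← massResidual_sub] at hbalance
  simp only [map_add, map_sub, map_mul, map_sum, map_pow, map_smul, smul_eq_mul, map_ofNat,
    evalAt_apply, h₁.mass, h₂.mass, convectiveMomentum_sub_apply h₁ h₂ hR] at hbalance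
  have hdissipation : 0 ≤ 4 * ν * (r p * ∑ i, ∑ j, symGrad (spaceDeriv n) (u - U) i j p ^ 2) := by
    positivity
  simp only [relRemainder, map_sub, AddSubgroupClass.coe_sub, Pi.sub_apply] at hbalance ⊢
  linarith

theorem isBigO_mul_of_isBigO_one {X : Type*} {l : Filter X} {f g s : X → ℝ}
    (hf : f =O[l] fun _ => (1 : ℝ)) (hg : g =O[l] s) : (fun x => f x * g x) =O[l] s := by
  simpa only [one_mul] using hf.mul hg

theorem isBigO_gradRemainder {d : periodicSmooth n} (U : Fin n → periodicSmooth n)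
    {l : Filter (ℝ × (Fin n → ℝ))} (hl : ∀ f : periodicSmooth n, f =O[l] fun _ => (1 : ℝ))
    {s : ℝ × (Fin n → ℝ) → ℝ} (hd : d =O[l] s) (hgrad : ∀ i, spaceDeriv n i d =O[l] s) :
    (fun p => gradRemainder (spaceDeriv n) d U p) =O[l] fun p => s p * s p := by
  have hval : ∀ p, gradRemainder (spaceDeriv n) d U p =
      divergence (spaceDeriv n) U p * ∑ i, spaceDeriv n i d p * spaceDeriv n i d p
        + 2 * ∑ i, ∑ j, spaceDeriv n i (U j) p * (spaceDeriv n i d p * spaceDeriv n j d p)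
        + 2 * (d p * ∑ i, spaceDeriv n i (divergence (spaceDeriv n) U) p * spaceDeriv n i d p) := by
    intro p
    rw [← evalAt_apply p (gradRemainder _ _ _)]
    simp only [gradRemainder, map_add, map_mul, map_sum, map_ofNat, evalAt_apply, sq]
    simp only [mul_comm]
  simp only [hval]
  exact ((isBigO_mul_of_isBigO_one (hl _) (IsBigO.fun_sum fun i _ => (hgrad i).mul (hgrad i))).add
    ((IsBigO.fun_sum fun i _ => IsBigO.fun_sum fun j _ =>
      isBigO_mul_of_isBigO_one (hl (spaceDeriv n i (U j)))
        ((hgrad i).mul (hgrad j))).const_mul_left 2)).add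
    ((hd.mul (IsBigO.fun_sum fun i _ =>
      isBigO_mul_of_isBigO_one (hl _) (hgrad i))).const_mul_left 2)

theorem isBigO_relForce (ν : ℝ) {r R : periodicSmooth n} {u U : Fin n → periodicSmooth n}
    {l : Filter (ℝ × (Fin n → ℝ))} (hl : ∀ f : periodicSmooth n, f =O[l] fun _ => (1 : ℝ))
    (hR : (fun p => (R p)⁻¹) =O[l] fun _ => (1 : ℝ)) {s : ℝ × (Fin n → ℝ) → ℝ}
    (hw : ∀ i, (u - U) i =O[l] s) (hd : (r - R) =O[l] s)
    (hgrad : ∀ i, spaceDeriv n i (r - R) =O[l] s) (i : Fin n) :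
    relForce ν r R u U i =O[l] s := by
  have hvisc : ∀ j, (fun p => symGrad (spaceDeriv n) U i j p *
      (spaceDeriv n j (r - R) p - spaceDeriv n j R p * ((R p)⁻¹ * (r - R) p))) =O[l] s := fun j =>
    isBigO_mul_of_isBigO_one (hl _) ((hgrad j).sub
      (isBigO_mul_of_isBigO_one (hl _) (isBigO_mul_of_isBigO_one hR hd)))
  have hadvect : ∀ j, (fun p => spaceDeriv n j (U i) p * (u - U) j p) =O[l] s := fun j =>
    isBigO_mul_of_isBigO_one (hl _) (hw j)
  exact ((IsBigO.fun_sum fun j _ => hvisc j).const_mul_left (2 * ν)).sub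
    (isBigO_mul_of_isBigO_one (hl r) (IsBigO.fun_sum fun j _ => hadvect j))

theorem isBigO_relRemainder (ν κ : ℝ) {r R : periodicSmooth n} {u U : Fin n → periodicSmooth n}
    {l : Filter (ℝ × (Fin n → ℝ))} (hl : ∀ f : periodicSmooth n, f =O[l] fun _ => (1 : ℝ))
    (hR : (fun p => (R p)⁻¹) =O[l] fun _ => (1 : ℝ)) {s : ℝ × (Fin n → ℝ) → ℝ}
    (hw : ∀ i, (u - U) i =O[l] s) (hd : (r - R) =O[l] s)
    (hgrad : ∀ i, spaceDeriv n i (r - R) =O[l] s) :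
    relRemainder ν κ r R u U =O[l] fun p => s p * s p := by
  have hforce : (fun p => ∑ i, (u - U) i p * relForce ν r R u U i p) =O[l] fun p => s p * s p :=
    IsBigO.fun_sum fun i _ => (hw i).mul (isBigO_relForce ν hl hR hw hd hgrad i)
  have htransport : (fun p => r p * ∑ j, (u - U) j p * spaceDeriv n j (r - R) p) =O[l]
      fun p => s p * s p :=
    isBigO_mul_of_isBigO_one (hl r) (IsBigO.fun_sum fun j _ => (hw j).mul (hgrad j))
  have hcompress : (fun p => divergence (spaceDeriv n) U p * (r - R) p ^ 2) =O[l]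
      fun p => s p * s p := by
    simpa only [sq] using isBigO_mul_of_isBigO_one (hl _) (hd.mul hd)
  exact (((hforce.const_mul_left 2).sub
    ((isBigO_gradRemainder U hl hd hgrad).const_mul_left (2 * κ ^ 2))).add
    (htransport.const_mul_left 2)).sub hcompress

theorem isBigO_sqrt_of_mul_sq_le {X : Type*} {S : Set X} {f e : X → ℝ} {a : ℝ} (ha : 0 < a)
    (hle : ∀ x ∈ S, a * f x ^ 2 ≤ e x) : f =O[𝓟 S] fun x => √(e x) := by
  refine isBigO_principal.2 ⟨√a⁻¹, fun x hx => ?_⟩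
  rw [Real.norm_of_nonneg (Real.sqrt_nonneg _), ← Real.sqrt_mul (inv_nonneg.2 ha.le),
    Real.norm_eq_abs]
  exact Real.abs_le_sqrt ((le_inv_mul_iff₀ ha).2 (hle x hx))

theorem relEnergy_apply (κ : ℝ) (r : periodicSmooth n) (w : Fin n → periodicSmooth n)
    (d : periodicSmooth n) (p : ℝ × (Fin n → ℝ)) :
    relEnergy (spaceDeriv n) κ r w d p =
      r p * ∑ i, w i p ^ 2 + 2 * κ ^ 2 * ∑ i, spaceDeriv n i d p ^ 2 + d p ^ 2 := by
  rw [← evalAt_apply p (relEnergy _ _ _ _ _)]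
  simp only [relEnergy, map_add, map_mul, map_sum, map_pow, map_smul, smul_eq_mul, evalAt_apply]

section Coercivity

variable (κ : ℝ) {r : periodicSmooth n} (w : Fin n → periodicSmooth n) (d : periodicSmooth n)
  {p : ℝ × (Fin n → ℝ)}

theorem relEnergy_nonneg (hr : 0 ≤ r p) : 0 ≤ relEnergy (spaceDeriv n) κ r w d p := by
  rw [relEnergy_apply]
  positivity

theorem mul_sq_velocity_le_relEnergy {c : ℝ} (hc : 0 ≤ c) (hr : c ≤ r p) (i : Fin n) :
    c * w i p ^ 2 ≤ relEnergy (spaceDeriv n) κ r w d p := by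
  rw [relEnergy_apply]
  have hi : w i p ^ 2 ≤ ∑ i, w i p ^ 2 :=
    Finset.single_le_sum (f := fun i => w i p ^ 2) (fun i _ => sq_nonneg _) (Finset.mem_univ i)
  calc c * w i p ^ 2 ≤ r p * ∑ i, w i p ^ 2 := by gcongr; exact hc.trans hr
    _ ≤ _ := by rw [add_assoc]; exact le_add_of_nonneg_right (by positivity)

theorem mul_sq_gradient_le_relEnergy (hr : 0 ≤ r p) (i : Fin n) :
    2 * κ ^ 2 * spaceDeriv n i d p ^ 2 ≤ relEnergy (spaceDeriv n) κ r w d p := by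
  rw [relEnergy_apply]
  have hi : spaceDeriv n i d p ^ 2 ≤ ∑ i, spaceDeriv n i d p ^ 2 :=
    Finset.single_le_sum (f := fun i => spaceDeriv n i d p ^ 2) (fun i _ => sq_nonneg _)
      (Finset.mem_univ i)
  calc 2 * κ ^ 2 * spaceDeriv n i d p ^ 2
      ≤ 2 * κ ^ 2 * ∑ i, spaceDeriv n i d p ^ 2 := by gcongr
    _ ≤ _ := (le_add_of_nonneg_left (by positivity)).trans (le_add_of_nonneg_right (sq_nonneg _))

theorem sq_density_le_relEnergy (hr : 0 ≤ r p) :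
    d p ^ 2 ≤ relEnergy (spaceDeriv n) κ r w d p := by
  rw [relEnergy_apply]
  exact le_add_of_nonneg_left (by positivity)

end Coercivity

theorem exists_relRemainder_le_mul_relEnergy (ν : ℝ) {κ T c : ℝ} (hκ : κ ≠ 0) (hc : 0 < c)
    {r R : periodicSmooth n} (u U : Fin n → periodicSmooth n)
    (hr : ∀ t ∈ Set.Icc 0 T, ∀ x, c ≤ r (t, x)) (hR : ∀ t ∈ Set.Icc 0 T, ∀ x, c ≤ R (t, x)) :
    ∃ K, ∀ t ∈ Set.Icc 0 T, ∀ x, relRemainder ν κ r R u U (t, x) ≤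
      K * relEnergy (spaceDeriv n) κ r (u - U) (r - R) (t, x) := by
  set S : Set (ℝ × (Fin n → ℝ)) := Set.Icc 0 T ×ˢ Set.univ
  have hrS : ∀ p ∈ S, c ≤ r p := fun p hp => hr p.1 hp.1 p.2
  have hrS0 : ∀ p ∈ S, 0 ≤ r p := fun p hp => hc.le.trans (hrS p hp)
  have hRinv : (fun p => (R p)⁻¹) =O[𝓟 S] fun _ => (1 : ℝ) := by
    refine isBigO_principal.2 ⟨c⁻¹, fun p hp => ?_⟩
    have hcR : c ≤ R p := hR p.1 hp.1 p.2
    rw [norm_one, mul_one, norm_inv, Real.norm_of_nonneg (hc.le.trans hcR)]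
    exact inv_anti₀ hc hcR
  obtain ⟨K, hK⟩ := isBigO_principal.1 (isBigO_relRemainder ν κ (fun f => isBigO_one f 0 T) hRinv
    (fun i => isBigO_sqrt_of_mul_sq_le hc fun p hp =>
      mul_sq_velocity_le_relEnergy κ (u - U) (r - R) hc.le (hrS p hp) i)
    (isBigO_sqrt_of_mul_sq_le one_pos fun p hp =>
      (one_mul _).trans_le (sq_density_le_relEnergy κ (u - U) (r - R) (hrS0 p hp)))
    (fun i => isBigO_sqrt_of_mul_sq_le (by positivity) fun p hp =>
      mul_sq_gradient_le_relEnergy κ (u - U) (r - R) (hrS0 p hp) i))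
  refine ⟨K, fun t ht x => (Real.le_norm_self _).trans ?_⟩
  have hmem : (t, x) ∈ S := ⟨ht, Set.mem_univ x⟩
  simpa only [Real.mul_self_sqrt (relEnergy_nonneg κ (u - U) (r - R) (hrS0 _ hmem)),
    Real.norm_of_nonneg (relEnergy_nonneg κ (u - U) (r - R) (hrS0 _ hmem))] using hK _ hmem

theorem spaceDeriv_eq_zero_of_slice_eq_zero {f : periodicSmooth n} {t : ℝ}
    (hf : ∀ x, f (t, x) = 0) (i : Fin n) (x : Fin n → ℝ) : spaceDeriv n i f (t, x) = 0 := by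
  rw [← fderiv_slice_single, funext hf, fderiv_fun_const]
  rfl

theorem weak_strong_uniqueness_pressureless_general {ν κ T c : ℝ} (hν : 0 ≤ ν) (hκ : κ ≠ 0)
    (hc : 0 < c) {r R : periodicSmooth n} {u U : Fin n → periodicSmooth n}
    (hr : ∀ t ∈ Set.Icc 0 T, ∀ x, c ≤ r (t, x)) (hR : ∀ t ∈ Set.Icc 0 T, ∀ x, c ≤ R (t, x))
    (hru : ∀ t ∈ Set.Ioo 0 T, ∀ x, IsSolutionAt ν κ r u (t, x))
    (hRU : ∀ t ∈ Set.Ioo 0 T, ∀ x, IsSolutionAt ν κ R U (t, x))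
    (hinit_density : ∀ x, r (0, x) = R (0, x)) (hinit_velocity : ∀ x i, u i (0, x) = U i (0, x)) :
    ∀ t ∈ Set.Icc 0 T, ∀ x, r (t, x) = R (t, x) ∧ ∀ i, u i (t, x) = U i (t, x) := by
  obtain ⟨F, hF⟩ := exists_timeDeriv_relEnergy_le hν κ r R u U
  obtain ⟨K, hK⟩ := exists_relRemainder_le_mul_relEnergy ν hκ hc u U hr hR
  have hd0 : ∀ x, (r - R) (0, x) = 0 := fun x => sub_eq_zero.2 (hinit_density x)
  have hw0 : ∀ x i, (u - U) i (0, x) = 0 := fun x i => sub_eq_zero.2 (hinit_velocity x i)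
  have henergy : ∀ t ∈ Set.Icc 0 T, ∀ x,
      relEnergy (spaceDeriv n) κ r (u - U) (r - R) (t, x) = 0 := by
    refine eq_zero_of_timeDeriv_le_divergence_add (F := F) (K := K)
      (fun t ht x => relEnergy_nonneg κ _ _ (hc.le.trans (hr t ht x))) (fun x => ?_)
      (fun t ht x => ?_)
    · simp only [relEnergy_apply, hd0, hw0, spaceDeriv_eq_zero_of_slice_eq_zero hd0, ne_eq,
        OfNat.ofNat_ne_zero, not_false_eq_true, zero_pow, Finset.sum_const_zero, mul_zero, add_zero]
    · have htc := Set.Ioo_subset_Icc_self ht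
      exact (hF (t, x) (hru t ht x) (hRU t ht x) (hc.trans_le (hr t htc x))
        (hc.trans_le (hR t htc x)).ne').trans (by gcongr; exact hK t htc x)
  intro t ht x
  have hsq_density := sq_density_le_relEnergy κ (u - U) (r - R) (hc.le.trans (hr t ht x))
  have hsq_velocity := mul_sq_velocity_le_relEnergy κ (u - U) (r - R) hc.le (hr t ht x)
  simp only [henergy t ht x] at hsq_density hsq_velocity
  refine ⟨sub_eq_zero.1 (sq_nonpos_iff _ |>.1 hsq_density), fun i => sub_eq_zero.1 ?_⟩
  exact (sq_nonpos_iff _).1 (nonpos_of_mul_nonpos_right (hsq_velocity i) hc)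

end RelativeEnergy

section ThreeDimensional

open periodicSmooth

/-- The scalar field `ρ` as an element of the algebra of smooth periodic functions. -/
def ofScalarField {n : ℕ} (ρ : ℝ → (Fin n → ℝ) → ℝ)
    (hρ : ContDiff ℝ (⊤ : ℕ∞) fun p : ℝ × (Fin n → ℝ) => ρ p.1 p.2)
    (hper : ∀ t x (k : Fin n → ℤ), ρ t (x + fun i => (k i : ℝ)) = ρ t x) : periodicSmooth n :=
  ⟨fun p => ρ p.1 p.2, hρ, hper⟩

/-- The components of the vector field `u` in the algebra of smooth periodic functions. -/
def ofVectorField {n : ℕ} (u : ℝ → (Fin n → ℝ) → Fin n → ℝ)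
    (hu : ContDiff ℝ (⊤ : ℕ∞) fun p : ℝ × (Fin n → ℝ) => u p.1 p.2)
    (hper : ∀ t x (k : Fin n → ℤ), u t (x + fun i => (k i : ℝ)) = u t x) (i : Fin n) :
    periodicSmooth n :=
  ofScalarField (fun t x => u t x i) (contDiff_pi.1 hu i) fun t x k => congrFun (hper t x k) i

variable (r : periodicSmooth 3) (v : Fin 3 → periodicSmooth 3) (t : ℝ) (x : V3)

theorem pd_slice (i : Fin 3) : pd i (fun y => r (t, y)) x = spaceDeriv 3 i r (t, x) :=
  fderiv_slice_single r t x i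

theorem vdiv_slice : vdiv (fun y i => v i (t, y)) x = divergence (spaceDeriv 3) v (t, x) := by
  rw [divergence_apply, coe_sum_apply]
  exact Finset.sum_congr rfl fun i _ => pd_slice (v i) t x i

theorem mdiv_slice (M : Fin 3 → Fin 3 → periodicSmooth 3) (i : Fin 3) :
    mdiv (fun y i j => M i j (t, y)) x i = divergence (spaceDeriv 3) (M i) (t, x) :=
  vdiv_slice (M i) t x

theorem lap_slice : lap (fun y => r (t, y)) x = laplacian (spaceDeriv 3) r (t, x) := by
  simp only [lap, laplacian, pd_slice, coe_sum_apply]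

theorem symJ_slice (i j : Fin 3) :
    symJ (fun y i => v i (t, y)) x i j = symGrad (spaceDeriv 3) v i j (t, x) := by
  rw [symJ, jacb, jacb, pd_slice, pd_slice, div_eq_inv_mul, ← one_div]
  rfl

theorem massResidual_apply : massResidual (timeDeriv 3) (spaceDeriv 3) r v (t, x) =
    deriv (fun s => r (s, x)) t + vdiv (fun y => r (t, y) • fun i => v i (t, y)) x := by
  rw [(hasDerivAt_timeDeriv r t x).deriv]
  exact congrArg (timeDeriv 3 r (t, x) + ·) (vdiv_slice (fun i => r * v i) t x).symm

theorem momentumResidual_apply (ν κ : ℝ) (i : Fin 3) :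
    momentumResidual (timeDeriv 3) (spaceDeriv 3) ν κ r v i (t, x) =
      ((fun i => deriv (fun s => r (s, x) * v i (s, x)) t)
        + mdiv (fun y i j => r (t, y) * v i (t, y) * v j (t, y)) x
        - (2 * ν) • mdiv (fun y i j => r (t, y) * symJ (fun y i => v i (t, y)) y i j) x
        - (2 * κ ^ 2) • (r (t, x) • grad (fun y => lap (fun y => r (t, y)) y) x)) i := by
  have htime : deriv (fun s => r (s, x) * v i (s, x)) t = timeDeriv 3 (r * v i) (t, x) :=
    (hasDerivAt_timeDeriv (r * v i) t x).deriv
  have hconv := mdiv_slice t x (fun i j => r * v i * v j) i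
  have hvisc := mdiv_slice t x (fun i j => r * symGrad (spaceDeriv 3) v i j) i
  have hcap := pd_slice (laplacian (spaceDeriv 3) r) t x i
  simp only [Pi.sub_apply, Pi.add_apply, Pi.smul_apply, grad, symJ_slice, lap_slice, htime, hcap]
  exact (congrArg₂ (fun a b => timeDeriv 3 (r * v i) (t, x) + a - (2 * ν) • b
    - (2 * κ ^ 2) • (r (t, x) • spaceDeriv 3 i (laplacian (spaceDeriv 3) r) (t, x)))
    hconv hvisc).symm

theorem isSolutionAt_iff (ν κ : ℝ) : IsSolutionAt ν κ r v (t, x) ↔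
    deriv (fun s => r (s, x)) t + vdiv (fun y => r (t, y) • fun i => v i (t, y)) x = 0 ∧
      (fun i => deriv (fun s => r (s, x) * v i (s, x)) t)
        + mdiv (fun y i j => r (t, y) * v i (t, y) * v j (t, y)) x
        - (2 * ν) • mdiv (fun y i j => r (t, y) * symJ (fun y i => v i (t, y)) y i j) x
        - (2 * κ ^ 2) • (r (t, x) • grad (fun y => lap (fun y => r (t, y)) y) x) = 0 := by
  rw [← massResidual_apply, funext_iff]
  simp only [← momentumResidual_apply]
  exact ⟨fun h => ⟨h.mass, h.momentum⟩, fun h => ⟨h.1, h.2⟩⟩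

end ThreeDimensional

/-- weak-strong uniqueness for pressureless capillary fluids,
classical form: two smooth periodic solutions of the pressureless
Navier–Stokes–Korteweg system with densities bounded below by `c > 0` and the
same initial data coincide on `[0,T] × ℝ³`. -/
theorem weak_strong_uniqueness_pressureless
    (ν κ T c : ℝ) (hν : 0 < ν) (hκ : 0 < κ) (hT : 0 < T) (hc : 0 < c)
    (ρ₁ ρ₂ : ℝ → V3 → ℝ) (u₁ u₂ : ℝ → V3 → V3)
    (hρ₁ : ContDiff ℝ (⊤ : ℕ∞) (fun p : ℝ × V3 => ρ₁ p.1 p.2))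
    (hρ₂ : ContDiff ℝ (⊤ : ℕ∞) (fun p : ℝ × V3 => ρ₂ p.1 p.2))
    (hu₁ : ContDiff ℝ (⊤ : ℕ∞) (fun p : ℝ × V3 => u₁ p.1 p.2))
    (hu₂ : ContDiff ℝ (⊤ : ℕ∞) (fun p : ℝ × V3 => u₂ p.1 p.2))
    (hρ₁per : ∀ t x (k : Fin 3 → ℤ), ρ₁ t (x + fun i => (k i : ℝ)) = ρ₁ t x)
    (hρ₂per : ∀ t x (k : Fin 3 → ℤ), ρ₂ t (x + fun i => (k i : ℝ)) = ρ₂ t x)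
    (hu₁per : ∀ t x (k : Fin 3 → ℤ), u₁ t (x + fun i => (k i : ℝ)) = u₁ t x)
    (hu₂per : ∀ t x (k : Fin 3 → ℤ), u₂ t (x + fun i => (k i : ℝ)) = u₂ t x)
    (hpos₁ : ∀ t ∈ Set.Icc (0 : ℝ) T, ∀ x, c ≤ ρ₁ t x)
    (hpos₂ : ∀ t ∈ Set.Icc (0 : ℝ) T, ∀ x, c ≤ ρ₂ t x)
    (hcont₁ : ∀ t ∈ Set.Ioo (0 : ℝ) T, ∀ x,
      deriv (fun s => ρ₁ s x) t + vdiv (fun y => ρ₁ t y • u₁ t y) x = 0)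
    (hcont₂ : ∀ t ∈ Set.Ioo (0 : ℝ) T, ∀ x,
      deriv (fun s => ρ₂ s x) t + vdiv (fun y => ρ₂ t y • u₂ t y) x = 0)
    (hmom₁ : ∀ t ∈ Set.Ioo (0 : ℝ) T, ∀ x,
      (fun i => deriv (fun s => ρ₁ s x * u₁ s x i) t)
        + mdiv (fun y i j => ρ₁ t y * u₁ t y i * u₁ t y j) x
        - (2 * ν) • mdiv (fun y i j => ρ₁ t y * symJ (u₁ t) y i j) x
        - (2 * κ ^ 2) • (ρ₁ t x • grad (fun y => lap (ρ₁ t) y) x)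
      = 0)
    (hmom₂ : ∀ t ∈ Set.Ioo (0 : ℝ) T, ∀ x,
      (fun i => deriv (fun s => ρ₂ s x * u₂ s x i) t)
        + mdiv (fun y i j => ρ₂ t y * u₂ t y i * u₂ t y j) x
        - (2 * ν) • mdiv (fun y i j => ρ₂ t y * symJ (u₂ t) y i j) x
        - (2 * κ ^ 2) • (ρ₂ t x • grad (fun y => lap (ρ₂ t) y) x)
      = 0)
    (hid_ρ : ∀ x, ρ₁ 0 x = ρ₂ 0 x)
    (hid_u : ∀ x, u₁ 0 x = u₂ 0 x) :
    ∀ t ∈ Set.Icc (0 : ℝ) T, ∀ x, ρ₁ t x = ρ₂ t x ∧ u₁ t x = u₂ t x := by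
  intro t ht x
  obtain ⟨hdensity, hvelocity⟩ := weak_strong_uniqueness_pressureless_general hν.le hκ.ne' hc
    (r := ofScalarField ρ₁ hρ₁ hρ₁per) (R := ofScalarField ρ₂ hρ₂ hρ₂per)
    (u := ofVectorField u₁ hu₁ hu₁per) (U := ofVectorField u₂ hu₂ hu₂per) hpos₁ hpos₂
    (fun t ht x => (isSolutionAt_iff _ _ t x ν κ).2 ⟨hcont₁ t ht x, hmom₁ t ht x⟩)
    (fun t ht x => (isSolutionAt_iff _ _ t x ν κ).2 ⟨hcont₂ t ht x, hmom₂ t ht x⟩)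
    hid_ρ (fun x => congrFun (hid_u x)) t ht x
  exact ⟨hdensity, funext hvelocity⟩
end
end

section
/- (Heat flow yields classical solutions of the pressureless viscous system.) Let ν > 0 and let ρ : ℝ × ℝ³ → ℝ be a C³ function with ρ > 0 everywhere satisfying the heat equation ∂_t ρ = 2ν Δρ. Define u = −2ν ∇(log ρ) (spatial gradient). Then (ρ, u) satisfies pointwise both the continuity equation ∂_t ρ + div(ρ u) = 0 and the pressureless viscous momentum equation ∂_t(ρ u) + div(ρ u ⊗ u) − 2ν div(ρ Du) = 0. -/
/-!
Write `κ = 2ν`. Multiplying `u = -κ ∇ log ρ` by `ρ` turns it into Fick's law `ρ u = -κ ∇ρ`, under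
which the continuity equation is the heat equation `∂ₜρ = κ Δρ`. Differentiating Fick's law once
more, and using that `∇u` is symmetric, gives `ρ u ⊗ u - κ ρ Du = κ² ∇²ρ`, whose divergence is
`κ² ∇Δρ`. The momentum equation is therefore `-κ` times the gradient of the heat equation.
-/

open scoped BigOperators
open MeasureTheory

noncomputable section

section DirectionalDerivative

variable {E E' G : Type*} [NormedAddCommGroup E] [NormedSpace ℝ E]
  [NormedAddCommGroup E'] [NormedSpace ℝ E'] [NormedAddCommGroup G] [NormedSpace ℝ G]

/-- The directional derivative `∂ᵥ f`, as an operator on functions so that it can be iterated.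
For `v = Pi.single i 1` it is the partial derivative `pd i`. -/
def dirDeriv (v : E) (f : E → G) (x : E) : G := fderiv ℝ f x v

lemma contDiff_dirDeriv {m n : WithTop ℕ∞} {f : E → G} (hf : ContDiff ℝ n f) (hmn : m + 1 ≤ n)
    (v : E) : ContDiff ℝ m (dirDeriv v f) :=
  (hf.fderiv_right hmn).clm_apply contDiff_const

lemma dirDeriv_const_mul (v : E) (c : ℝ) (f : E → ℝ) (x : E) :
    dirDeriv v (fun y => c * f y) x = c * dirDeriv v f x :=
  DFunLike.congr_fun (congrFun (fderiv_const_smul_field c) x) v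

lemma dirDeriv_mul (v : E) {f g : E → ℝ} {x : E} (hf : DifferentiableAt ℝ f x)
    (hg : DifferentiableAt ℝ g x) :
    dirDeriv v (fun y => f y * g y) x = f x * dirDeriv v g x + g x * dirDeriv v f x := by
  simp [dirDeriv, fderiv_fun_mul hf hg]

lemma dirDeriv_sub (v : E) {f g : E → G} {x : E} (hf : DifferentiableAt ℝ f x)
    (hg : DifferentiableAt ℝ g x) :
    dirDeriv v (fun y => f y - g y) x = dirDeriv v f x - dirDeriv v g x := by
  simp [dirDeriv, fderiv_fun_sub hf hg]

lemma dirDeriv_sum {ι : Type*} (s : Finset ι) (v : E) {f : ι → E → G} {x : E}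
    (hf : ∀ i ∈ s, DifferentiableAt ℝ (f i) x) :
    dirDeriv v (fun y => ∑ i ∈ s, f i y) x = ∑ i ∈ s, dirDeriv v (f i) x := by
  simp [dirDeriv, fderiv_fun_sum hf]

lemma dirDeriv_log (v : E) {f : E → ℝ} {x : E} (hf : DifferentiableAt ℝ f x) (hx : f x ≠ 0) :
    dirDeriv v (fun y => Real.log (f y)) x = dirDeriv v f x / f x := by
  simp [dirDeriv, fderiv.log hf hx, div_eq_inv_mul]

lemma dirDeriv_dirDeriv_eq_fderiv_fderiv (v w : E) {f : E → G} {x : E}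
    (hf : DifferentiableAt ℝ (fderiv ℝ f) x) :
    dirDeriv v (dirDeriv w f) x = fderiv ℝ (fderiv ℝ f) x v w := by
  change fderiv ℝ (fun y => fderiv ℝ f y w) x v = _
  simp [fderiv_clm_apply hf (differentiableAt_const w)]

lemma dirDeriv_comm (v w : E) {f : E → G} (hf : ContDiff ℝ 2 f) :
    dirDeriv v (dirDeriv w f) = dirDeriv w (dirDeriv v f) := by
  funext x
  have hf' : DifferentiableAt ℝ (fderiv ℝ f) x :=
    (hf.fderiv_right (m := 1) (by norm_num)).differentiable one_ne_zero x
  rw [dirDeriv_dirDeriv_eq_fderiv_fderiv v w hf', dirDeriv_dirDeriv_eq_fderiv_fderiv w v hf']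
  exact (hf.contDiffAt.isSymmSndFDerivAt (by simp)).eq v w

lemma dirDeriv_prodMk_right (v : E) {f : E' × E → G} {t : E'} {x : E}
    (hf : DifferentiableAt ℝ f (t, x)) :
    dirDeriv v (fun y => f (t, y)) x = dirDeriv (0, v) f (t, x) := by
  have h : HasFDerivAt (fun y => f (t, y)) _ x :=
    hf.hasFDerivAt.comp x (hasFDerivAt_prodMk_right t x)
  simp [dirDeriv, h.fderiv]

lemma dirDeriv_prodMk_left (w : E') {f : E' × E → G} {t : E'} {x : E}
    (hf : DifferentiableAt ℝ f (t, x)) :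
    dirDeriv w (fun s => f (s, x)) t = dirDeriv (w, 0) f (t, x) := by
  have h : HasFDerivAt (fun s => f (s, x)) _ t :=
    hf.hasFDerivAt.comp t (hasFDerivAt_prodMk_left t x)
  simp [dirDeriv, h.fderiv]

lemma dirDeriv_left_right_comm (w : E') (v : E) {f : E' → E → G}
    (hf : ContDiff ℝ 2 (Function.uncurry f)) (t : E') (x : E) :
    dirDeriv w (fun s => dirDeriv v (f s) x) t =
      dirDeriv v (fun y => dirDeriv w (fun s => f s y) t) x := by
  have hf₁ : Differentiable ℝ (Function.uncurry f) := hf.differentiable two_ne_zero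
  have hf₂ (a : E' × E) : Differentiable ℝ (dirDeriv a (Function.uncurry f)) :=
    (contDiff_dirDeriv hf (m := 1) (by norm_num) a).differentiable one_ne_zero
  have hright (s : E') (y : E) : dirDeriv v (f s) y = dirDeriv (0, v) (Function.uncurry f) (s, y) :=
    dirDeriv_prodMk_right v (hf₁ (s, y))
  have hleft (s : E') (y : E) :
      dirDeriv w (fun r => f r y) s = dirDeriv (w, 0) (Function.uncurry f) (s, y) :=
    dirDeriv_prodMk_left w (hf₁ (s, y))
  simp only [hright, hleft]
  rw [dirDeriv_prodMk_left w (hf₂ _ _), dirDeriv_prodMk_right v (hf₂ _ _), dirDeriv_comm _ _ hf]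

end DirectionalDerivative

section FrameLaplacian

variable {E G ι : Type*} [NormedAddCommGroup E] [NormedSpace ℝ E]
  [NormedAddCommGroup G] [NormedSpace ℝ G] [Fintype ι]

/-- The second-order operator `∑ᵢ ∂ₑᵢ²` of a finite family of vectors `e`. It is the Laplacian when
`e` is an orthonormal basis, but the family need be neither independent nor spanning. -/
def frameLaplacian (e : ι → E) (f : E → G) (x : E) : G :=
  ∑ i, dirDeriv (e i) (dirDeriv (e i) f) x

lemma dirDeriv_frameLaplacian (e : ι → E) (v : E) {f : E → G} (hf : ContDiff ℝ 3 f) :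
    dirDeriv v (frameLaplacian e f) = frameLaplacian e (dirDeriv v f) := by
  funext x
  have hf₁ (w : E) : ContDiff ℝ 2 (dirDeriv w f) := contDiff_dirDeriv hf (by norm_num) w
  have hf₂ (i : ι) : Differentiable ℝ (dirDeriv (e i) (dirDeriv (e i) f)) :=
    (contDiff_dirDeriv (hf₁ (e i)) (m := 1) (by norm_num) (e i)).differentiable one_ne_zero
  calc dirDeriv v (frameLaplacian e f) x
      = ∑ i, dirDeriv v (dirDeriv (e i) (dirDeriv (e i) f)) x :=
        dirDeriv_sum _ v fun i _ => hf₂ i x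
    _ = ∑ i, dirDeriv (e i) (dirDeriv (e i) (dirDeriv v f)) x :=
        Finset.sum_congr rfl fun i _ => by
          rw [dirDeriv_comm v (e i) (hf₁ (e i)),
            dirDeriv_comm v (e i) (hf.of_le (by norm_num))]

end FrameLaplacian

section LogVelocity

variable {E ι : Type*} [NormedAddCommGroup E] [NormedSpace ℝ E] [Fintype ι]

/-- The component along `v` of the velocity `-κ ∇ log f` attached to a density `f`. Working with
components avoids choosing a basis or an inner product on `E`. -/
def logVelocity (κ : ℝ) (f : E → ℝ) (v : E) (x : E) : ℝ :=
  -(κ * dirDeriv v (fun y => Real.log (f y)) x)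

lemma contDiff_logVelocity {m n : WithTop ℕ∞} (κ : ℝ) {f : E → ℝ} (hf : ContDiff ℝ n f)
    (hmn : m + 1 ≤ n) (hf₀ : ∀ x, f x ≠ 0) (v : E) : ContDiff ℝ m (logVelocity κ f v) :=
  (contDiff_const.mul (contDiff_dirDeriv (hf.log hf₀) hmn v)).neg

lemma mul_logVelocity (κ : ℝ) {f : E → ℝ} {x : E} (hf : DifferentiableAt ℝ f x) (hx : f x ≠ 0)
    (v : E) : f x * logVelocity κ f v x = -κ * dirDeriv v f x := by
  rw [logVelocity, dirDeriv_log v hf hx]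
  field_simp

lemma dirDeriv_logVelocity_comm (κ : ℝ) {f : E → ℝ} (hf : ContDiff ℝ 2 f) (hf₀ : ∀ x, f x ≠ 0)
    (v w : E) : dirDeriv w (logVelocity κ f v) = dirDeriv v (logVelocity κ f w) := by
  have h (a : E) : logVelocity κ f a = fun x => -κ * dirDeriv a (fun y => Real.log (f y)) x :=
    funext fun _ => (neg_mul _ _).symm
  funext x
  rw [h, h, dirDeriv_const_mul, dirDeriv_const_mul, dirDeriv_comm w v (hf.log hf₀)]

lemma sum_dirDeriv_mul_logVelocity (e : ι → E) (κ : ℝ) {f : E → ℝ} (hf : Differentiable ℝ f)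
    (hf₀ : ∀ x, f x ≠ 0) (x : E) :
    ∑ i, dirDeriv (e i) (fun y => f y * logVelocity κ f (e i) y) x =
      -κ * frameLaplacian e f x := by
  simp only [mul_logVelocity κ (hf _) (hf₀ _), dirDeriv_const_mul, frameLaplacian,
    Finset.mul_sum]

lemma mul_logVelocity_mul_sub_strain (κ : ℝ) {f : E → ℝ} (hf : ContDiff ℝ 2 f)
    (hf₀ : ∀ x, f x ≠ 0) (v w : E) (x : E) :
    f x * logVelocity κ f v x * logVelocity κ f w x -
        κ * (f x * ((dirDeriv w (logVelocity κ f v) x + dirDeriv v (logVelocity κ f w) x) / 2)) =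
      κ ^ 2 * dirDeriv w (dirDeriv v f) x := by
  have hf₁ : Differentiable ℝ f := hf.differentiable two_ne_zero
  have hu : Differentiable ℝ (logVelocity κ f v) :=
    (contDiff_logVelocity κ hf (m := 1) (by norm_num) hf₀ v).differentiable one_ne_zero
  have fick : f x * logVelocity κ f w x = -κ * dirDeriv w f x := mul_logVelocity κ (hf₁ x) (hf₀ x) w
  have dirDeriv_fick : f x * dirDeriv w (logVelocity κ f v) x + logVelocity κ f v x * dirDeriv w f x
      = -κ * dirDeriv w (dirDeriv v f) x := by
    rw [← dirDeriv_mul w (hf₁ x) (hu x), ← dirDeriv_const_mul]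
    simp only [mul_logVelocity κ (hf₁ _) (hf₀ _)]
  rw [dirDeriv_logVelocity_comm κ hf hf₀ w v]
  linear_combination logVelocity κ f v x * fick - κ * dirDeriv_fick

lemma sum_dirDeriv_momentum_flux_sub_strain (e : ι → E) (κ : ℝ) {f : E → ℝ} (hf : ContDiff ℝ 3 f)
    (hf₀ : ∀ x, f x ≠ 0) (v : E) (x : E) :
    ∑ j, dirDeriv (e j) (fun y => f y * logVelocity κ f v y * logVelocity κ f (e j) y) x -
        κ * ∑ j, dirDeriv (e j) (fun y => f y * ((dirDeriv (e j) (logVelocity κ f v) y +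
          dirDeriv v (logVelocity κ f (e j)) y) / 2)) x =
      κ ^ 2 * dirDeriv v (frameLaplacian e f) x := by
  have hf₂ : ContDiff ℝ 2 f := hf.of_le (by norm_num)
  have hu (a : E) : ContDiff ℝ 2 (logVelocity κ f a) :=
    contDiff_logVelocity κ hf (by norm_num) hf₀ a
  have hDu (a b : E) : ContDiff ℝ 1 (dirDeriv a (logVelocity κ f b)) :=
    contDiff_dirDeriv (hu b) (by norm_num) a
  have hflux (j : ι) : Differentiable ℝ
      fun y => f y * logVelocity κ f v y * logVelocity κ f (e j) y :=
    ((hf₂.mul (hu v)).mul (hu (e j))).differentiable two_ne_zero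
  have hstrain (j : ι) : Differentiable ℝ fun y => κ * (f y *
      ((dirDeriv (e j) (logVelocity κ f v) y + dirDeriv v (logVelocity κ f (e j)) y) / 2)) :=
    (contDiff_const.mul ((hf.of_le (by norm_num)).mul
      (((hDu (e j) v).add (hDu v (e j))).div_const 2))).differentiable one_ne_zero
  rw [dirDeriv_frameLaplacian e v hf, frameLaplacian, Finset.mul_sum, Finset.mul_sum,
    ← Finset.sum_sub_distrib]
  refine Finset.sum_congr rfl fun j _ => ?_
  rw [← dirDeriv_const_mul, ← dirDeriv_sub (e j) (hflux j x) (hstrain j x), ← dirDeriv_const_mul]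
  simp only [mul_logVelocity_mul_sub_strain κ hf₂ hf₀]

end LogVelocity

section HeatFlow

variable {E ι : Type*} [NormedAddCommGroup E] [NormedSpace ℝ E] [Fintype ι]

lemma deriv_mul_logVelocity_of_heat (e : ι → E) (κ : ℝ) {ρ : ℝ → E → ℝ}
    (hρ : ContDiff ℝ 2 (Function.uncurry ρ)) (hρ₀ : ∀ t x, ρ t x ≠ 0)
    (hheat : ∀ t x, deriv (fun s => ρ s x) t = κ * frameLaplacian e (ρ t) x)
    (v : E) (t : ℝ) (x : E) :
    deriv (fun s => ρ s x * logVelocity κ (ρ s) v x) t =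
      -κ ^ 2 * dirDeriv v (frameLaplacian e (ρ t)) x := by
  have hdiff (s : ℝ) : Differentiable ℝ (ρ s) :=
    (hρ.comp (contDiff_prodMk_right s)).differentiable two_ne_zero
  calc deriv (fun s => ρ s x * logVelocity κ (ρ s) v x) t
      = deriv (fun s => -κ * dirDeriv v (ρ s) x) t := by
        simp only [mul_logVelocity κ (hdiff _ _) (hρ₀ _ _)]
    _ = -κ * deriv (fun s => dirDeriv v (ρ s) x) t := deriv_const_mul_field _
    _ = -κ * dirDeriv v (fun y => deriv (fun s => ρ s y) t) x :=
        congrArg (-κ * ·) (dirDeriv_left_right_comm 1 v hρ t x)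
    _ = -κ ^ 2 * dirDeriv v (frameLaplacian e (ρ t)) x := by
        simp only [hheat, dirDeriv_const_mul]
        ring

theorem heat_flow_solves_pressureless_general (e : ι → E) (κ : ℝ) (ρ : ℝ → E → ℝ)
    (hρ : ContDiff ℝ 3 (Function.uncurry ρ)) (hpos : ∀ t x, 0 < ρ t x)
    (hheat : ∀ t x, deriv (fun s => ρ s x) t = κ * frameLaplacian e (ρ t) x)
    (u : ℝ → E → ι → ℝ) (hu : ∀ t x i, u t x i = logVelocity κ (ρ t) (e i) x) :
    (∀ t x, deriv (fun s => ρ s x) t + ∑ i, dirDeriv (e i) (fun y => ρ t y * u t y i) x = 0) ∧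
    (∀ t x i, deriv (fun s => ρ s x * u s x i) t
      + ∑ j, dirDeriv (e j) (fun y => ρ t y * u t y i * u t y j) x
      - κ * ∑ j, dirDeriv (e j) (fun y => ρ t y * ((dirDeriv (e j) (fun z => u t z i) y +
          dirDeriv (e i) (fun z => u t z j) y) / 2)) x = 0) := by
  obtain rfl : u = fun t x i => logVelocity κ (ρ t) (e i) x :=
    funext fun t => funext fun x => funext (hu t x)
  have hslice (t : ℝ) : ContDiff ℝ 3 (ρ t) := hρ.comp (contDiff_prodMk_right t)
  have hρ₀ (t : ℝ) (x : E) : ρ t x ≠ 0 := (hpos t x).ne'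
  refine ⟨fun t x => ?continuity, fun t x i => ?momentum⟩
  case continuity =>
    rw [hheat, sum_dirDeriv_mul_logVelocity e κ ((hslice t).differentiable three_ne_zero) (hρ₀ t)]
    ring
  case momentum =>
    rw [add_sub_assoc, sum_dirDeriv_momentum_flux_sub_strain e κ (hslice t) (hρ₀ t) (e i) x,
      deriv_mul_logVelocity_of_heat e κ (hρ.of_le (by norm_num)) hρ₀ hheat]
    ring

end HeatFlow

/-- if `ρ > 0` solves the heat equation `∂ₜρ = 2νΔρ`, then
`(ρ, u)` with `u = −2ν∇log ρ` is a classical solution of the pressureless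
viscous system. -/
theorem heat_flow_solves_pressureless
    (ν : ℝ) (hν : 0 < ν)
    (ρ : ℝ → V3 → ℝ)
    (hρ : ContDiff ℝ 3 (fun p : ℝ × V3 => ρ p.1 p.2))
    (hpos : ∀ t x, 0 < ρ t x)
    (hheat : ∀ t x, deriv (fun s => ρ s x) t = 2 * ν * lap (ρ t) x)
    (u : ℝ → V3 → V3)
    (hu : ∀ t x, u t x = -((2 * ν) • grad (fun y => Real.log (ρ t y)) x)) :
    (∀ t x, deriv (fun s => ρ s x) t + vdiv (fun y => ρ t y • u t y) x = 0)
    ∧ (∀ t x,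
        (fun i => deriv (fun s => ρ s x * u s x i) t)
          + mdiv (fun y i j => ρ t y * u t y i * u t y j) x
          - (2 * ν) • mdiv (fun y i j => ρ t y * symJ (u t) y i j) x
        = 0) := by
  have solution := heat_flow_solves_pressureless_general (fun i => Pi.single i 1) (2 * ν) ρ hρ
    hpos hheat u fun t x i => congrFun (hu t x) i
  exact ⟨solution.1, fun t x => funext (solution.2 t x)⟩
end
end
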